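/- Let k be an algebraically closed field of characteristic 0 and let F ∈ k[x_0,…,x_n] be an irreducible homogeneous polynomial of degree d ≥ 2 defining the integral non-linear hypersurface X = {F = 0} ⊂ P^n. Suppose that either n ≥ 5, or n = 4 and d ≥ 3. Suppose moreover that every hyperplane section of X is covered by its linear divisors: for every nonzero linear form ℓ on k^{n+1} and every nonzero x ∈ k^{n+1} with F(x) = 0 and ℓ(x) = 0, there exists an (n−2)-dimensional k-linear subspace W of k^{n+1} with x ∈ W such that both ℓ and F vanish identically on W. Then X is covered by its linear divisors: for every nonzero x ∈ k^{n+1} with F(x) = 0 there exists an (n−1)-dimensional k-linear subspace W of k^{n+1} with x ∈ W on which F vanishes identically. -/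

import Mathlib

open MvPolynomial

/-!
At a general point `a` of `X = {F = 0}`, restrict the Hessian of `F` to the tangent space and call
the result `B`. Linear subspaces of `X` through `a` are isotropic for `B`. If `B` had rank at least
three, then for `n ≥ 5` some hyperplane through `a` would cut out a form of rank at least three,
which has no isotropic subspace as large as a linear divisor of the section.

For `n = 4` the isotropic subspaces are just large enough, and they only show that the cubic form of
third derivatives vanishes on the cone `B = 0`, so that `B` divides it. As in the theorem of
Maschke, Pick and Berwald, `X` is then a quadric: in the function field of the affine cone over `X`,
the quadric osculating `X` at the generic point is fixed by all derivations up to scaling. It is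
therefore defined over `k` and contains `X`, which contradicts `d ≥ 3`.

Hence `B` has rank at most two and is a product of two linear forms. The two subspaces of the
tangent space on which one of them vanishes contain all linear subspaces of `X` through `a`. If
neither were contained in `X`, a hyperplane through `a` and one point of each off `X` would have no
linear divisor through `a`. So `X` has a linear divisor through its general point. The existence of
a linear divisor through `x` is a closed condition on `x`, by elimination theory applied to its
Plücker coordinates, hence it holds at every point.
-/

open scoped Polynomial TensorProduct in
theorem exists_derivation_apply_ne_zero_of_transcendental {k K : Type*} [Field k] [CharZero k]
    [Field K] [Algebra k K] [Algebra.EssFiniteType k K] {r : K} (hr : Transcendental k r) :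
    ∃ D : Derivation k K K, D r ≠ 0 := by
  let _ : Algebra k[X] K := (Polynomial.aeval r).toAlgebra
  have : IsScalarTower k k[X] K :=
    .of_algebraMap_eq' (Polynomial.aeval r : k[X] →ₐ[k] K).comp_algebraMap.symm
  have : FaithfulSMul k[X] K :=
    (faithfulSMul_iff_algebraMap_injective _ _).2 (transcendental_iff_injective.1 hr)
  let _ := FractionRing.liftAlgebra k[X] K
  have : IsScalarTower k (FractionRing k[X]) K := .to₁₃₄ k k[X] (FractionRing k[X]) K
  have : CharZero (FractionRing k[X]) := charZero_of_injective_algebraMap (algebraMap k _).injective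
  have : Algebra.EssFiniteType (FractionRing k[X]) K := .of_comp k _ K
  have : Algebra.FormallySmooth k[X] (FractionRing k[X]) := .of_isLocalization (nonZeroDivisors _)
  have : Algebra.FormallySmooth k[X] K := .comp _ (FractionRing k[X]) _
  have hinj : Function.Injective (KaehlerDifferential.mapBaseChange k k[X] K) := by
    rw [injective_iff_map_eq_zero]
    intro x hx
    obtain ⟨y, rfl⟩ := (Algebra.H1Cotangent.exact_δ_mapBaseChange k k[X] K x).1 hx
    rw [Subsingleton.elim y 0, map_zero]
  have hdX : (1 : K) ⊗ₜ[k[X]] KaehlerDifferential.D k k[X] Polynomial.X ≠ 0 := by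
    intro h
    have := congrArg (TensorProduct.rid k[X] K ∘
      (KaehlerDifferential.polynomialEquiv k).toLinearMap.lTensor K) h
    simp at this
  have hdr : KaehlerDifferential.D k K r ≠ 0 := by
    have := (map_ne_zero_iff _ hinj).2 hdX
    simpa [RingHom.algebraMap_toAlgebra] using this
  obtain ⟨f, hf⟩ := Module.Projective.exists_dual_ne_zero K hdr
  exact ⟨f.compDer (KaehlerDifferential.D k K), hf⟩

theorem mem_range_algebraMap_of_forall_derivation_eq_zero {k K : Type*} [Field k] [IsAlgClosed k]
    [CharZero k] [Field K] [Algebra k K] [Algebra.EssFiniteType k K] {r : K}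
    (hr : ∀ D : Derivation k K K, D r = 0) : r ∈ Set.range (algebraMap k K) := by
  have halg : IsAlgebraic k r := by
    by_contra h
    obtain ⟨D, hD⟩ := exists_derivation_apply_ne_zero_of_transcendental h
    exact hD (hr D)
  exact minpoly.mem_range_of_degree_eq_one k r
    (IsAlgClosed.degree_eq_one_of_irreducible k (minpoly.irreducible halg.isIntegral))

theorem pderiv_pderiv_comm {σ k : Type*} [CommRing k] (F : MvPolynomial σ k) (i j : σ) :
    pderiv i (pderiv j F) = pderiv j (pderiv i F) := by
  classical
  have h : ⁅pderiv (R := k) i, pderiv j⁆ = 0 :=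
    derivation_ext fun l => (Derivation.commutator_apply ..).trans
      (by simp [pderiv_X, Pi.single_apply, apply_ite])
  exact sub_eq_zero.1 ((Derivation.commutator_apply ..).symm.trans (DFunLike.congr_fun h F))

section Derivatives

variable {σ k R S : Type*} [Fintype σ] [CommRing k] [CommRing R] [CommRing S] [Algebra k R]
  [Algebra k S]

/-- The gradient of `F` at an `R`-valued point `x`, as a linear form. -/
noncomputable def grad (F : MvPolynomial σ k) (x : σ → R) : (σ → R) →ₗ[R] R :=
  ∑ i, aeval x (pderiv i F) • LinearMap.proj i

/-- The second derivative of `F` at an `R`-valued point `x`, as a bilinear form. -/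
noncomputable def hess (F : MvPolynomial σ k) (x : σ → R) : (σ → R) →ₗ[R] (σ → R) →ₗ[R] R :=
  ∑ i, (LinearMap.proj i).smulRight (grad (pderiv i F) x)

/-- The third derivative of `F` at an `R`-valued point `x`, as a trilinear form. -/
noncomputable def third (F : MvPolynomial σ k) (x : σ → R) :
    (σ → R) →ₗ[R] (σ → R) →ₗ[R] (σ → R) →ₗ[R] R :=
  ∑ i, (LinearMap.proj i).smulRight (hess (pderiv i F) x)

variable (F : MvPolynomial σ k) (x y z w : σ → R)

theorem grad_apply : grad F x y = ∑ i, aeval x (pderiv i F) * y i := by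
  simp [grad, LinearMap.sum_apply]

theorem hess_apply : hess F x y z = ∑ i, y i * grad (pderiv i F) x z := by
  simp [hess, LinearMap.sum_apply]

theorem third_apply : third F x y z w = ∑ i, y i * hess (pderiv i F) x z w := by
  simp [third, LinearMap.sum_apply]

theorem hess_comm : hess F x y z = hess F x z y := by
  simp only [hess_apply, grad_apply, Finset.mul_sum]
  rw [Finset.sum_comm]
  refine Finset.sum_congr rfl fun i _ => Finset.sum_congr rfl fun j _ => ?_
  rw [pderiv_pderiv_comm]
  ring

theorem third_comm_right : third F x y z w = third F x y w z := by
  simp only [third_apply, hess_comm _ x z w]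

theorem third_comm_left : third F x y z w = third F x z y w := by
  simp only [third_apply, hess_apply, Finset.mul_sum]
  rw [Finset.sum_comm]
  refine Finset.sum_congr rfl fun i _ => Finset.sum_congr rfl fun j _ => ?_
  rw [pderiv_pderiv_comm]
  ring

theorem map_grad (f : R →ₐ[k] S) : f (grad F x y) = grad F (f ∘ x) (f ∘ y) := by
  simp only [grad_apply, map_sum, map_mul, comp_aeval_apply, Function.comp_def]

theorem map_hess (f : R →ₐ[k] S) :
    f (hess F x y z) = hess F (f ∘ x) (f ∘ y) (f ∘ z) := by
  simp only [hess_apply, map_sum, map_mul, map_grad, Function.comp_apply]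

theorem map_third (f : R →ₐ[k] S) :
    f (third F x y z w) = third F (f ∘ x) (f ∘ y) (f ∘ z) (f ∘ w) := by
  simp only [third_apply, map_sum, map_mul, map_hess, Function.comp_apply]

theorem grad_mul (G : MvPolynomial σ k) :
    grad (F * G) x y = aeval x F * grad G x y + aeval x G * grad F x y := by
  simp only [grad_apply, Derivation.leibniz, map_add, smul_eq_mul, map_mul, add_mul,
    Finset.sum_add_distrib, Finset.mul_sum, mul_assoc]

theorem grad_add (G : MvPolynomial σ k) : grad (F + G) x y = grad F x y + grad G x y := by
  simp only [grad_apply, map_add, add_mul, Finset.sum_add_distrib]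

variable (D : Derivation k R R)

theorem derivation_aeval : D (aeval x F) = grad F x (D ∘ x) := by
  classical
  induction F using MvPolynomial.induction_on with
  | C c => simp [grad_apply]
  | add p q hp hq => simp only [map_add, hp, hq, grad_apply, add_mul, Finset.sum_add_distrib]
  | mul_X p j hp =>
    simp [hp, grad_apply, pderiv_X, Pi.single_apply, apply_ite (aeval x), add_mul,
      Finset.sum_add_distrib, Finset.mul_sum, mul_assoc]

theorem derivation_grad : D (grad F x y) = hess F x y (D ∘ x) + grad F x (D ∘ y) := by
  simp only [grad_apply, hess_apply, map_sum, Derivation.leibniz, smul_eq_mul, derivation_aeval,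
    Finset.sum_add_distrib, Function.comp_apply]
  exact add_comm _ _

theorem derivation_hess : D (hess F x y z) =
    third F x y z (D ∘ x) + hess F x (D ∘ y) z + hess F x y (D ∘ z) := by
  simp only [hess_apply, third_apply, map_sum, Derivation.leibniz, smul_eq_mul, derivation_grad,
    Finset.sum_add_distrib, mul_add, Function.comp_apply, mul_comm (grad _ _ _)]
  ring

variable {F} {d : ℕ}

theorem grad_self_of_isHomogeneous (hF : F.IsHomogeneous d) : grad F x x = d * aeval x F := by
  have := congrArg (aeval x) hF.sum_X_mul_pderiv
  simpa [grad_apply, mul_comm] using this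

theorem hess_self_of_isHomogeneous (hF : F.IsHomogeneous d) :
    hess F x x y = (d - 1 : ℕ) * grad F x y := by
  rw [hess_comm, hess_apply, grad_apply, Finset.mul_sum]
  refine Finset.sum_congr rfl fun i _ => ?_
  rw [grad_self_of_isHomogeneous x hF.pderiv]
  ring

end Derivatives

section Lines

variable {σ k : Type*} [Fintype σ] [Field k] [Infinite k] {F : MvPolynomial σ k} {a y : σ → k}

open scoped Polynomial in
theorem grad_hess_third_eq_zero_of_eval_add_smul_eq_zero
    (h : ∀ t : k, eval (a + t • y) F = 0) :
    grad F a y = 0 ∧ hess F a y y = 0 ∧ third F a y y y = 0 := by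
  let x : σ → k[X] := fun i => .C (a i) + .C (y i) * .X
  let v : σ → k[X] := fun i => .C (y i)
  let D : Derivation k k[X] k[X] := Polynomial.derivative'
  have hDx : D ∘ x = v := by ext1 i; simp [D, x, v]
  have hDv : D ∘ v = 0 := by ext1 i; simp [D, v]
  have hF : aeval x F = 0 := Polynomial.funext fun t => by
    have hx : Polynomial.aeval t ∘ x = a + t • y := by ext1 i; simp [x, mul_comm t]
    rw [← Polynomial.coe_aeval_eq_eval, comp_aeval_apply, map_zero]
    change aeval (Polynomial.aeval t ∘ x) F = 0
    rw [hx, aeval_eq_eval]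
    exact h t
  have h₁ : grad F x v = 0 := by simpa [hF, hDx] using (derivation_aeval F x D).symm
  have h₂ : hess F x v v = 0 := by simpa [h₁, hDx, hDv] using (derivation_grad F x v D).symm
  have h₃ : third F x v v v = 0 := by simpa [h₂, hDx, hDv] using (derivation_hess F x v v D).symm
  let e : k[X] →ₐ[k] k := Polynomial.aeval 0
  have hex : e ∘ x = a := by ext1 i; simp [e, x]
  have hev : e ∘ v = y := by ext1 i; simp [e, v]
  refine ⟨?_, ?_, ?_⟩
  · simpa [h₁, hex, hev] using (map_grad F x v e).symm
  · simpa [h₂, hex, hev] using (map_hess F x v v e).symm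
  · simpa [h₃, hex, hev] using (map_third F x v v v e).symm

end Lines

section BilinearForms

variable {ι K V : Type*} [Field K] [AddCommGroup V] [Module K V] {B : LinearMap.BilinForm K V}

/-- The matrix of the values of a bilinear form on a family of vectors. -/
def gramMatrix {R M : Type*} [CommRing R] [AddCommGroup M] [Module R M]
    (B : LinearMap.BilinForm R M) (e : ι → M) : Matrix ι ι R :=
  .of fun i j => B (e i) (e j)

theorem apply_eq_zero_of_forall_apply_self_eq_zero [NeZero (2 : K)] (hB : B.IsSymm)
    {W : Submodule K V} (hW : ∀ x ∈ W, B x x = 0) {x y : V} (hx : x ∈ W) (hy : y ∈ W) :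
    B x y = 0 := by
  let _ : Invertible (2 : K) := invertibleOfNonzero two_ne_zero
  rw [hB.polarization, hW _ (W.add_mem hx hy), hW x hx, hW y hy]
  simp

variable [Fintype ι] [DecidableEq ι] {e : ι → V}

theorem eq_zero_of_mem_span_of_forall_apply_eq_zero (he : (gramMatrix B e).det ≠ 0) {x : V}
    (hx : x ∈ Submodule.span K (Set.range e)) (h : ∀ i, B (e i) x = 0) : x = 0 := by
  obtain ⟨c, rfl⟩ := (Submodule.mem_span_range_iff_exists_fun K).1 hx
  have hc : c = 0 := Matrix.eq_zero_of_mulVec_eq_zero he <| funext fun i => by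
    simpa [gramMatrix, Matrix.mulVec, dotProduct, mul_comm] using h i
  simp [hc]

theorem linearIndependent_of_det_gramMatrix_ne_zero (he : (gramMatrix B e).det ≠ 0) :
    LinearIndependent K e := by
  refine Fintype.linearIndependent_iff.2 fun c hc => ?_
  refine congrFun (Matrix.eq_zero_of_mulVec_eq_zero he <| funext fun i => ?_)
  simpa [gramMatrix, Matrix.mulVec, dotProduct, mul_comm] using congrArg (B (e i)) hc

theorem two_mul_finrank_le_of_isotropic [FiniteDimensional K V] (hB : B.Nondegenerate)
    {U : Submodule K V} (hU : ∀ x ∈ U, ∀ y ∈ U, B x y = 0) :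
    2 * Module.finrank K U ≤ Module.finrank K V := by
  have hle : U ≤ B.orthogonal U := fun y hy x hx => hU x hx y hy
  have := Submodule.finrank_mono hle
  have := U.finrank_le
  rw [LinearMap.BilinForm.finrank_orthogonal hB] at *
  omega

theorem two_mul_finrank_add_card_le_of_isotropic [FiniteDimensional K V] (hB : B.IsSymm)
    (he : (gramMatrix B e).det ≠ 0) {T W : Submodule K V} (heT : ∀ i, e i ∈ T) (hWT : W ≤ T)
    (hW : ∀ x ∈ W, ∀ y ∈ W, B x y = 0) :
    2 * Module.finrank K W + Fintype.card ι ≤ 2 * Module.finrank K T := by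
  let E := Submodule.span K (Set.range e)
  have hE : Module.finrank K E = Fintype.card ι :=
    finrank_span_eq_card (linearIndependent_of_det_gramMatrix_ne_zero he)
  have hET : E ≤ T := Submodule.span_le.2 (Set.range_subset_iff.2 heT)
  have hdisj : Disjoint E (B.orthogonal E) := Submodule.disjoint_def.2 fun x hx hxE =>
    eq_zero_of_mem_span_of_forall_apply_eq_zero he hx
      fun i => hxE _ (Submodule.subset_span (Set.mem_range_self i))
  have hiso := two_mul_finrank_le_of_isotropic
    (B.nondegenerate_restrict_of_disjoint_orthogonal hB.isRefl hdisj)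
    (U := (W ⊓ E).submoduleOf E) fun x hx y hy => hW x hx.1 y hy.1
  rw [(Submodule.submoduleOfEquivOfLe inf_le_right).finrank_eq, hE] at hiso
  have hsup := Submodule.finrank_mono (sup_le hWT hET)
  have := Submodule.finrank_sup_add_finrank_inf_eq W E
  omega

section RankTwo

theorem apply_self_mul_apply_eq_of_forall_sq_eq [NeZero (2 : K)] (hB : B.IsSymm) {u : V}
    (h : ∀ v, B u u * B v v = B u v ^ 2) (v w : V) : B u u * B v w = B u v * B u w := by
  have hvw := h (v + w)
  simp only [map_add, LinearMap.add_apply, hB.eq w v] at hvw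
  have : (2 : K) * (B u u * B v w - B u v * B u w) = 0 := by
    linear_combination hvw - h v - h w
  exact sub_eq_zero.1 ((mul_eq_zero.1 this).resolve_left two_ne_zero)

theorem exists_two_by_two_minor_ne_zero [NeZero (2 : K)] (hB : B.IsSymm) {w : Fin 3 → V}
    (hw : (gramMatrix B w).det ≠ 0) :
    ∃ u v, B u u ≠ 0 ∧ B u u * B v v - B u v ^ 2 ≠ 0 := by
  by_contra! hminor
  by_cases hiso : ∀ x, B x x = 0
  · have hzero (x y) : B x y = 0 := apply_eq_zero_of_forall_apply_self_eq_zero hB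
      (W := ⊤) (fun x _ => hiso x) trivial trivial
    exact hw (by simp [Matrix.det_fin_three, gramMatrix, hzero])
  obtain ⟨u, hu⟩ := not_forall.1 hiso
  have hrank := apply_self_mul_apply_eq_of_forall_sq_eq hB fun v => sub_eq_zero.1 (hminor u v hu)
  have hgram : gramMatrix B w = .of fun i j => (B u u)⁻¹ * (B u (w i) * B u (w j)) := by
    ext i j
    rw [Matrix.of_apply, ← hrank, inv_mul_cancel_left₀ hu, gramMatrix, Matrix.of_apply]
  apply hw
  rw [hgram, Matrix.det_fin_three]
  simp only [Matrix.of_apply]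
  ring

theorem exists_smul_apply_self_eq_one [IsAlgClosed K] {x : V} (hx : B x x ≠ 0) :
    ∃ c : K, B (c • x) (c • x) = 1 := by
  obtain ⟨c, hc⟩ := IsAlgClosed.exists_eq_mul_self (B x x)⁻¹
  refine ⟨c, ?_⟩
  rw [map_smul, map_smul, LinearMap.smul_apply, smul_smul, ← hc, smul_eq_mul, inv_mul_cancel₀ hx]

theorem exists_apply_self_eq_mul_of_det_gramMatrix_eq_zero [IsAlgClosed K] (hB : B.IsSymm)
    (h : ∀ w : Fin 3 → V, (gramMatrix B w).det = 0) :
    ∃ u v, ∀ x, B x x = B u x * B v x := by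
  by_cases hzero : ∀ x, B x x = 0
  · exact ⟨0, 0, by simpa using hzero⟩
  push Not at hzero
  obtain ⟨e₀, he₀⟩ := hzero
  obtain ⟨c, hc⟩ := exists_smul_apply_self_eq_one he₀
  set e := c • e₀
  by_cases horth : ∀ x, B e x = 0 → B x x = 0
  · refine ⟨e, e, fun x => ?_⟩
    have := horth (x - B e x • e) (by simp [hc])
    simp only [map_sub, map_smul, LinearMap.sub_apply, LinearMap.smul_apply, smul_eq_mul,
      hB.eq x e, hc] at this
    linear_combination this
  push Not at horth
  obtain ⟨f₀, hef₀, hf₀⟩ := horth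
  obtain ⟨b, hb⟩ := exists_smul_apply_self_eq_one hf₀
  set f := b • f₀
  have hef : B e f = 0 := by simp [f, hef₀]
  obtain ⟨i, hi⟩ := IsAlgClosed.exists_eq_mul_self (-1 : K)
  refine ⟨e + i • f, e - i • f, fun x => ?_⟩
  let g := x - B e x • e - B f x • f
  have heg : B e g = 0 := by simp [g, hc, hef]
  have hfg : B f g = 0 := by simp [g, hb, hB.eq f e, hef]
  have hg := h ![e, f, g]
  simp only [gramMatrix, Matrix.det_fin_three, Matrix.of_apply, Matrix.cons_val, hB.eq f e,
    hB.eq g e, hB.eq g f, hc, hb, hef, heg, hfg] at hg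
  have hg' : B g g = B x x - B e x ^ 2 - B f x ^ 2 := by
    simp only [g, map_sub, map_smul, LinearMap.sub_apply, LinearMap.smul_apply, smul_eq_mul,
      hB.eq x e, hB.eq x f, hB.eq f e, hc, hb, hef]
    ring
  simp only [map_add, map_sub, map_smul, LinearMap.add_apply, LinearMap.sub_apply,
    LinearMap.smul_apply, smul_eq_mul]
  linear_combination hg - hg' - B f x ^ 2 * hi

end RankTwo

section Cubic

/-- A trilinear form is symmetric when it is invariant under the two transpositions of adjacent
arguments. -/
structure IsSymmTrilinear {R M : Type*} [CommRing R] [AddCommGroup M] [Module R M]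
    (S : M →ₗ[R] M →ₗ[R] M →ₗ[R] R) : Prop where
  left : ∀ x y z, S x y z = S y x z
  right : ∀ x y z, S x y z = S x z y

variable {S : V →ₗ[K] V →ₗ[K] V →ₗ[K] K}

theorem IsSymmTrilinear.apply_add_self (hS : IsSymmTrilinear S) (x y : V) :
    S (x + y) (x + y) (x + y) = S x x x + 3 * S x x y + 3 * S x y y + S y y y := by
  simp only [map_add, LinearMap.add_apply, hS.left y x, hS.right x y x, hS.right y y x]
  ring

/-- The symmetric trilinear form `(x, y, z) ↦ θ x * B y z + θ y * B x z + θ z * B x y`, three times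
the symmetrized product of a linear form and a symmetric bilinear form. -/
def symmProd {R M : Type*} [CommRing R] [AddCommGroup M] [Module R M] (θ : M →ₗ[R] R)
    (B : LinearMap.BilinForm R M) : M →ₗ[R] M →ₗ[R] M →ₗ[R] R :=
  θ.smulRight B + (θ.smulRight B).flip + B.compr₂ (LinearMap.toSpanSingleton R _ θ)

@[simp]
theorem symmProd_apply {R M : Type*} [CommRing R] [AddCommGroup M] [Module R M] (θ : M →ₗ[R] R)
    (B : LinearMap.BilinForm R M) (x y z : M) :
    symmProd θ B x y z = θ x * B y z + θ y * B x z + θ z * B x y := by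
  simp [symmProd, mul_comm]

set_option maxSynthPendingDepth 3 in
theorem IsSymmTrilinear.sub_symmProd {T : V →ₗ[K] V →ₗ[K] V →ₗ[K] K} (hT : IsSymmTrilinear T)
    (hB : B.IsSymm) (c : K) (θ : V →ₗ[K] K) : IsSymmTrilinear (c • T - symmProd θ B) where
  left x y z := by
    simp only [LinearMap.sub_apply, LinearMap.smul_apply, symmProd_apply, hT.left x y, hB.eq x y]
    ring
  right x y z := by
    simp only [LinearMap.sub_apply, LinearMap.smul_apply, symmProd_apply, hT.right x y, hB.eq z y]
    ring

variable [CharZero K]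

theorem IsSymmTrilinear.eq_zero_of_forall_apply_self_eq_zero (hS : IsSymmTrilinear S)
    (h : ∀ x, S x x x = 0) : S = 0 := by
  have hxxy (x y) : S x x y = 0 := by
    have h₁ := hS.apply_add_self x y
    have h₂ := hS.apply_add_self (-x) y
    simp only [h, map_neg, LinearMap.neg_apply] at h₁ h₂
    have : (6 : K) * S x x y = 0 := by linear_combination -h₁ - h₂
    simpa using this
  ext x y z
  have hxyz := hxxy (x + y) z
  simp only [map_add, LinearMap.add_apply, hxxy, hS.left y x] at hxyz
  have : (2 : K) * S x y z = 0 := by linear_combination hxyz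
  simpa using this

section Divisibility

variable (hB : B.IsSymm) (hS : IsSymmTrilinear S) {u : V} (hu : B u u ≠ 0)
  (huS : ∀ x, S u u x = 0) (hiso : ∀ x, B x x = 0 → S x x x = 0)
include hB hS hu huS hiso

-- The vectors `± c • u + w` with `c ^ 2 * B u u = - B w w` are isotropic.
theorem IsSymmTrilinear.eq_zero_of_orthogonal [IsAlgClosed K] {w : V} (huw : B u w = 0) :
    S w w w = 0 ∧ (B w w ≠ 0 → S u w w = 0) := by
  obtain ⟨c, hc⟩ := IsAlgClosed.exists_eq_mul_self (-(B w w) / B u u)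
  have hcw : B w w = -(c * c * B u u) := by rw [← hc]; field_simp
  have hS_add (b : K) (hb : b * b = c * c) : 3 * b * S u w w + S w w w = 0 := by
    have := hiso (b • u + w) (by
      simp only [map_add, map_smul, LinearMap.add_apply, LinearMap.smul_apply, smul_eq_mul,
        hB.eq w u, huw, hcw]
      linear_combination B u u * hb)
    rw [hS.apply_add_self] at this
    simp only [map_smul, LinearMap.smul_apply, smul_eq_mul, huS] at this
    linear_combination this
  have h₁ := hS_add c rfl
  have h₂ := hS_add (-c) (neg_mul_neg c c)
  refine ⟨?_, fun hw => ?_⟩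
  · have : (2 : K) * S w w w = 0 := by linear_combination h₁ + h₂
    simpa using this
  · have hc0 : c ≠ 0 := by rintro rfl; simp [hcw] at hw
    have : (6 * c) * S u w w = 0 := by linear_combination h₁ - h₂
    simpa [hc0] using this

theorem IsSymmTrilinear.apply_eq_zero_of_orthogonal [IsAlgClosed K] {w z : V} (huw : B u w = 0)
    (huz : B u z = 0) (hz : B z z ≠ 0) : S u w w = 0 := by
  have hnoniso {x} (hux : B u x = 0) (hx : B x x ≠ 0) : S u x x = 0 :=
    (hS.eq_zero_of_orthogonal hB hu huS hiso hux).2 hx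
  by_cases hw : B w w = 0
  swap
  · exact hnoniso huw hw
  obtain ⟨t, ht0, ht⟩ : ∃ t : K, t ≠ 0 ∧ (t * B z z) ^ 2 ≠ (2 * B w z) ^ 2 := by
    by_contra! h
    have h₁ := h 1 one_ne_zero
    have h₂ := h 2 two_ne_zero
    have : (3 : K) * B z z ^ 2 = 0 := by linear_combination h₂ - h₁
    simp [hz] at this
  have hpert (s : K) (hs : s * s = t * t) : S u w w + 2 * s * S u w z = 0 := by
    have hs0 : s ≠ 0 := by rintro rfl; simp_all
    have := hnoniso (x := w + s • z) (by simp [huw, huz]) (by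
      simp only [map_add, map_smul, LinearMap.add_apply, LinearMap.smul_apply, smul_eq_mul,
        hB.eq z w, hw]
      intro h
      have : s * (s * B z z + 2 * B w z) = 0 := by linear_combination h
      have := (mul_eq_zero.1 this).resolve_left hs0
      exact ht (by linear_combination (s * B z z - 2 * B w z) * this - B z z ^ 2 * hs))
    simp only [map_add, map_smul, LinearMap.add_apply, LinearMap.smul_apply, smul_eq_mul,
      hS.right u z w, hnoniso huz hz] at this
    linear_combination this
  have : (2 : K) * S u w w = 0 := by
    linear_combination hpert t rfl + hpert (-t) (neg_mul_neg t t)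
  simpa using this

theorem IsSymmTrilinear.eq_zero_of_isotropic_le [IsAlgClosed K] {z : V}
    (hz : B u u * B z z - B u z ^ 2 ≠ 0) : S = 0 := by
  refine hS.eq_zero_of_forall_apply_self_eq_zero fun x => ?_
  have hproj (v) : B u (v - (B u v / B u u) • u) = 0 := by
    simp only [map_sub, map_smul, smul_eq_mul]
    field_simp
    ring
  have hz' : B (z - (B u z / B u u) • u) (z - (B u z / B u u) • u) ≠ 0 := by
    simp only [map_sub, map_smul, LinearMap.sub_apply, LinearMap.smul_apply, smul_eq_mul,
      hB.eq z u]
    contrapose! hz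
    field_simp at hz
    linear_combination hz
  obtain ⟨w, huw, hx⟩ : ∃ w, B u w = 0 ∧ x = (B u x / B u u) • u + w :=
    ⟨_, hproj x, (add_sub_cancel _ _).symm⟩
  rw [hx, hS.apply_add_self]
  simp only [map_smul, LinearMap.smul_apply, huS, (hS.eq_zero_of_orthogonal hB hu huS hiso huw).1,
    hS.apply_eq_zero_of_orthogonal hB hu huS hiso huw (hproj z) hz', smul_zero, mul_zero, add_zero]

end Divisibility

-- The linear form is the only one for which the difference of the two sides vanishes on all
-- triples `(u, u, x)`.
set_option maxSynthPendingDepth 3 in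
theorem IsSymmTrilinear.smul_eq_symmProd_of_isotropic [IsAlgClosed K]
    {T : V →ₗ[K] V →ₗ[K] V →ₗ[K] K} (hT : IsSymmTrilinear T) (hB : B.IsSymm)
    (hiso : ∀ x, B x x = 0 → T x x x = 0) {u z : V} (hu : B u u ≠ 0)
    (hz : B u u * B z z - B u z ^ 2 ≠ 0) :
    (3 * B u u ^ 2) • T = symmProd ((3 * B u u) • T u u - (2 * T u u u) • B u) B := by
  refine sub_eq_zero.1 <| (hT.sub_symmProd hB _ _).eq_zero_of_isotropic_le hB hu
    (fun x => ?_) (fun x hx => ?_) hz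
  · simp only [LinearMap.sub_apply, LinearMap.smul_apply, symmProd_apply, smul_eq_mul]
    ring
  · simp only [LinearMap.sub_apply, LinearMap.smul_apply, symmProd_apply, smul_eq_mul, hx,
      hiso x hx]
    ring

end Cubic

end BilinearForms

section Integrability

variable {V K : Type*} [Field K] {h A : V → V → K}

section

variable {u v : V} (hsymm : ∀ i j, h i j = h j i) (hu : h u u ≠ 0)
  (huv : h u u * h v v - h u v ^ 2 ≠ 0)
include hsymm hu huv

theorem eq_zero_of_forall_mul_eq_mul_swap {τ : V → K}
    (hτ : ∀ i j l, τ j * h l i = τ l * h j i) (j : V) : τ j = 0 := by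
  have hτu : τ u = 0 := by
    have : τ u * (h u u * h v v - h u v ^ 2) = 0 := by
      linear_combination h u u * hτ v u v - h u v * hτ u u v - τ u * h u v * hsymm u v
    exact (mul_eq_zero.1 this).resolve_right huv
  have := hτ u j u
  rw [hτu, zero_mul] at this
  exact (mul_eq_zero.1 this).resolve_right hu

variable [NeZero (2 : K)] (hA : ∀ l k i j, A l i * h j k - A k i * h j l + A l j * h i k
  - A k j * h i l + (A l k - A k l) * h i j = 0)
include hA

theorem apply_left_comm_of_curvature_eq (k : V) :
    A u k = A k u ∧ A k u * h u u = A u u * h u k := by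
  have hzero {a b : K} (hb : b ≠ 0) (h : 2 * (a * b) = 0) : a = 0 :=
    (mul_eq_zero.1 ((mul_eq_zero.1 h).resolve_left two_ne_zero)).resolve_right hb
  have huuv := hA u v u u
  have hvuv := hA u v v v
  have hmixed := hA u v u v
  simp only [hsymm v u] at hvuv hmixed
  have hav : A u v - A v u = 0 := hzero (mul_ne_zero two_ne_zero huv) <| by
    linear_combination h v v * huuv + h u u * hvuv - 2 * h u v * hmixed
  have huuk := hA u k u u
  have hvuk := hA u k v v
  have huvk := hA u k u v
  simp only [hsymm v u] at hvuk huvk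
  have hak : A u k - A k u = 0 := hzero (mul_ne_zero hu huv) <| by
    have huv' : A u v * h u u - A u u * h u v = 0 := mul_left_cancel₀ two_ne_zero <| by
      linear_combination 3 * h u u * hav - huuv
    linear_combination 2 * h u u * (h u u * hvuk - 2 * h u v * huvk) + 2 * h u v ^ 2 * huuk
      + 4 * (h u v * h u k - h u u * h v k) * huv'
  refine ⟨sub_eq_zero.1 hak, ?_⟩
  exact mul_left_cancel₀ two_ne_zero <| by linear_combination h u u * hak - huuk

theorem exists_eq_mul_of_curvature_eq : ∃ c, ∀ i j, A i j = c * h i j := by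
  have hcomm := apply_left_comm_of_curvature_eq hsymm hu huv hA
  refine ⟨A u u / h u u, fun i j => ?_⟩
  rw [div_mul_eq_mul_div, eq_div_iff hu, hsymm i j]
  have := hA i u j u
  simp only [hsymm _ u] at this
  have hij : A j u * h u i = A i u * h u j := mul_right_cancel₀ hu <| by
    linear_combination h u i * (hcomm j).2 - h u j * (hcomm i).2
  linear_combination this + hij + h u i * (hcomm j).1 + h u j * (hcomm i).1

end

end Integrability

section ParallelQuadric

variable {V k K : Type*} [CommRing k] [Field K] [Algebra k K] [NeZero (2 : K)]
  {D : V → Derivation k K K} {π φ : V → K} {u v : V}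
  (hcomm : ∀ i j r, D i (D j r) = D j (D i r))
  (hsymm : ∀ i j, D i (π j) = D j (π i))
  (hu : D u (π u) ≠ 0) (huv : D u (π u) * D v (π v) - D u (π v) ^ 2 ≠ 0)
  (hthird : ∀ l i j, D l (D i (π j)) = φ l * D i (π j) + φ i * D l (π j) + φ j * D l (π i))
include hcomm hsymm hu huv hthird

theorem exists_derivation_eq_mul_add : ∃ c, ∀ i j, D i (φ j) = φ i * φ j + c * D i (π j) := by
  obtain ⟨c, hc⟩ := exists_eq_mul_of_curvature_eq (h := fun i j => D i (π j))
    (A := fun i j => D i (φ j) - φ i * φ j) hsymm hu huv fun l k i j => by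
      have hlk := hcomm l k (D i (π j))
      simp only [hthird, map_add, Derivation.leibniz, smul_eq_mul] at hlk
      simp only [hsymm l k, hsymm j] at hlk ⊢
      linear_combination hlk + (D l (φ j) - φ l * φ j) * hsymm i k
        - (D k (φ j) - φ k * φ j) * hsymm i l
  exact ⟨c, fun i j => sub_eq_iff_eq_add'.1 (hc i j)⟩

-- The Maschke-Pick-Berwald argument: when the cubic form is divisible by the second fundamental
-- form, the coefficients of the osculating quadric are constant up to a common factor.
theorem exists_derivation_quadric_eq_mul : ∃ c, ∀ l i j,
    D l (D i (π j) - φ i * π j - φ j * π i + c * (π i * π j)) =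
      φ l * (D i (π j) - φ i * π j - φ j * π i + c * (π i * π j)) := by
  obtain ⟨c, hφ⟩ := exists_derivation_eq_mul_add hcomm hsymm hu huv hthird
  have hc (l) : D l c - φ l * c = 0 :=
    eq_zero_of_forall_mul_eq_mul_swap (h := fun i j => D i (π j))
      (τ := fun l => D l c - φ l * c) hsymm hu huv (fun i j l => by
        have hlj := hcomm j l (φ i)
        simp only [hφ, hthird, map_add, Derivation.leibniz, smul_eq_mul] at hlj
        simp only [hsymm j l] at hlj
        linear_combination hlj) l
  refine ⟨c, fun l i j => ?_⟩
  simp only [map_add, map_sub, Derivation.leibniz, smul_eq_mul, hthird, hφ]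
  linear_combination π i * π j * hc l

end ParallelQuadric

section TangentSpace

variable {σ k R S : Type*} [Fintype σ] [CommRing k] [CommRing R] [CommRing S] [Algebra k R]
  [Algebra k S]

/-- For a direction `ε` with `grad F x ε ≠ 0`, a multiple of the projection along `ε` onto the
tangent space `ker (grad F x)`. The factor `grad F x ε` keeps it polynomial in `x`. -/
noncomputable def tangentProj (F : MvPolynomial σ k) (x ε : σ → R) : (σ → R) →ₗ[R] (σ → R) :=
  grad F x ε • LinearMap.id - (grad F x).smulRight ε

/-- The second fundamental form of `{F = 0}` at `x`, pulled back by `tangentProj`. -/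
noncomputable def tangentHess (F : MvPolynomial σ k) (x ε : σ → R) :
    LinearMap.BilinForm R (σ → R) :=
  (hess F x).compl₁₂ (tangentProj F x ε) (tangentProj F x ε)

/-- The third derivative of `F` at `x`, pulled back by `tangentProj`. -/
noncomputable def tangentThird (F : MvPolynomial σ k) (x ε : σ → R) :
    (σ → R) →ₗ[R] (σ → R) →ₗ[R] (σ → R) →ₗ[R] R :=
  ((third F x).compr₂ (LinearMap.lcomp R R (tangentProj F x ε))).compl₁₂
    (tangentProj F x ε) (tangentProj F x ε)

variable (F : MvPolynomial σ k) (x ε v w y : σ → R)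

theorem tangentProj_apply : tangentProj F x ε v = grad F x ε • v - grad F x v • ε := rfl

theorem tangentHess_apply : tangentHess F x ε v w =
    hess F x (tangentProj F x ε v) (tangentProj F x ε w) := rfl

theorem tangentThird_apply : tangentThird F x ε v w y =
    third F x (tangentProj F x ε v) (tangentProj F x ε w) (tangentProj F x ε y) := rfl

@[simp]
theorem grad_tangentProj : grad F x (tangentProj F x ε v) = 0 := by
  simp [tangentProj_apply, mul_comm]

variable {F x v} in
theorem tangentProj_of_grad_eq_zero (hv : grad F x v = 0) :
    tangentProj F x ε v = grad F x ε • v := by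
  simp [tangentProj_apply, hv]

variable {F x y} in
theorem tangentHess_of_grad_eq_zero (hy : grad F x y = 0) :
    tangentHess F x ε v y = grad F x ε * hess F x (tangentProj F x ε v) y := by
  simp [tangentHess_apply, tangentProj_of_grad_eq_zero _ hy]

theorem map_comp_tangentProj (f : R →ₐ[k] S) :
    f ∘ tangentProj F x ε v = tangentProj F (f ∘ x) (f ∘ ε) (f ∘ v) := by
  ext i
  simp [tangentProj_apply, ← map_grad]

theorem map_tangentHess (f : R →ₐ[k] S) :
    f (tangentHess F x ε v w) = tangentHess F (f ∘ x) (f ∘ ε) (f ∘ v) (f ∘ w) := by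
  simp only [tangentHess_apply, map_hess, map_comp_tangentProj]

theorem map_tangentThird (f : R →ₐ[k] S) : f (tangentThird F x ε v w y) =
    tangentThird F (f ∘ x) (f ∘ ε) (f ∘ v) (f ∘ w) (f ∘ y) := by
  simp only [tangentThird_apply, map_third, map_comp_tangentProj]

theorem isSymm_hess : LinearMap.BilinForm.IsSymm (hess F x) := ⟨hess_comm F x⟩

theorem isSymm_tangentHess : (tangentHess F x ε).IsSymm := ⟨fun _ _ => hess_comm ..⟩

theorem isSymmTrilinear_tangentThird : IsSymmTrilinear (tangentThird F x ε) where
  left _ _ _ := third_comm_left ..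
  right _ _ _ := third_comm_right ..

variable {F x} in
theorem hess_self_eq_zero_of_isHomogeneous {d : ℕ} (hF : F.IsHomogeneous d)
    (hv : grad F x v = 0) : hess F x v x = 0 := by
  rw [hess_comm, hess_self_of_isHomogeneous x v hF, hv, mul_zero]

end TangentSpace

section LinearDivisors

variable {σ k : Type*} [Fintype σ] [Field k]

/-- Some linear divisor of the hypersurface `{F = 0}` contains the point `a`: a linear subspace of
codimension two in the ambient vector space. -/
def HasLinearDivisorThrough (F : MvPolynomial σ k) (a : σ → k) : Prop :=
  ∃ W : Submodule k (σ → k), Module.finrank k W + 2 = Fintype.card σ ∧ a ∈ W ∧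
    ∀ y ∈ W, eval y F = 0

/-- Every hyperplane section of `{F = 0}` through `a` has a linear divisor containing `a`: a linear
subspace of codimension three in the ambient vector space. -/
def HasSectionDivisorsThrough (F : MvPolynomial σ k) (a : σ → k) : Prop :=
  ∀ ℓ : (σ → k) →ₗ[k] k, ℓ ≠ 0 → ℓ a = 0 →
    ∃ W : Submodule k (σ → k), Module.finrank k W + 3 = Fintype.card σ ∧ a ∈ W ∧
      ∀ y ∈ W, ℓ y = 0 ∧ eval y F = 0

theorem finrank_inf_ker_add_one {V : Type*} [AddCommGroup V] [Module k V] [FiniteDimensional k V]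
    {U : Submodule k V} {f : V →ₗ[k] k} (hf : ¬ U ≤ LinearMap.ker f) :
    Module.finrank k (U ⊓ LinearMap.ker f : Submodule k V) + 1 = Module.finrank k U := by
  have hne : f.domRestrict U ≠ 0 := fun h => hf fun x hx => LinearMap.congr_fun h ⟨x, hx⟩
  have hker : LinearMap.ker (f.domRestrict U) = (U ⊓ LinearMap.ker f).submoduleOf U := by
    ext x
    simp [Submodule.submoduleOf]
  rw [← Module.Dual.finrank_ker_add_one_of_ne_zero hne, hker,
    (Submodule.submoduleOfEquivOfLe inf_le_left).finrank_eq]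

theorem exists_linearForm_not_le_ker {ι V : Type*} [Finite ι] [Infinite k] [AddCommGroup V]
    [Module k V] {U : Submodule k V} {W : ι → Submodule k V} (hW : ∀ i, ¬ W i ≤ U) :
    ∃ ℓ : V →ₗ[k] k, U ≤ LinearMap.ker ℓ ∧ ∀ i, ¬ W i ≤ LinearMap.ker ℓ := by
  choose w hw hwU using fun i => SetLike.not_le_iff_exists.1 (hW i)
  obtain ⟨f, hf⟩ := Module.exists_dual_forall_apply_ne_zero (K := k) (fun i => U.mkQ (w i))
    fun i => by simpa using hwU i
  refine ⟨f ∘ₗ U.mkQ, fun x hx => ?_, fun i h => hf i (h (hw i))⟩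
  simp [(Submodule.Quotient.mk_eq_zero U).2 hx]

variable {F : MvPolynomial σ k} {a : σ → k}

theorem isotropic_of_forall_eval_eq_zero [CharZero k] {W : Submodule k (σ → k)} (ha : a ∈ W)
    (hW : ∀ y ∈ W, eval y F = 0) :
    W ≤ LinearMap.ker (grad F a) ∧ (∀ y ∈ W, ∀ z ∈ W, hess F a y z = 0) ∧
      ∀ y ∈ W, third F a y y y = 0 := by
  have hline (y) (hy : y ∈ W) := grad_hess_third_eq_zero_of_eval_add_smul_eq_zero
    fun t => hW _ (W.add_mem ha (W.smul_mem t hy))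
  exact ⟨fun y hy => (hline y hy).1, fun y hy z hz =>
    apply_eq_zero_of_forall_apply_self_eq_zero (isSymm_hess F a)
      (fun x hx => (hline x hx).2.1) hy hz,
    fun y hy => (hline y hy).2.2⟩

theorem finrank_ker_grad_add_one (ha : grad F a ≠ 0) :
    Module.finrank k (LinearMap.ker (grad F a)) + 1 = Fintype.card σ := by
  rw [Module.Dual.finrank_ker_add_one_of_ne_zero ha, Module.finrank_fintype_fun_eq_card]

section GramDeterminant

variable [CharZero k] (ha : grad F a ≠ 0) (hsec : HasSectionDivisorsThrough F a)
include ha hsec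

-- The hyperplane through `a` and the three vectors has a linear divisor too large to be isotropic.
theorem det_gramMatrix_hess_eq_zero_of_six_le (hσ : 6 ≤ Fintype.card σ) {w : Fin 3 → σ → k}
    (hw : ∀ i, grad F a (w i) = 0) : (gramMatrix (hess F a) w).det = 0 := by
  by_contra hdet
  have hT := finrank_ker_grad_add_one ha
  let e : Fin 4 → σ → k := Fin.cons a w
  let U := Submodule.span k (Set.range e)
  have hU : Module.finrank k U ≤ 4 := finrank_range_le_card e
  have haU : a ∈ U := Submodule.subset_span ⟨0, rfl⟩
  have hwU (i : Fin 3) : w i ∈ U := Submodule.subset_span ⟨i.succ, rfl⟩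
  obtain ⟨ℓ, hℓU, hℓT⟩ := exists_linearForm_not_le_ker (ι := Unit) (U := U)
    (W := fun _ => LinearMap.ker (grad F a)) fun _ h => by
      have := Submodule.finrank_mono h
      omega
  have hℓ : ℓ ≠ 0 := by
    rintro rfl
    exact hℓT () (by simp)
  obtain ⟨W, hWdim, haW, hW⟩ := hsec ℓ hℓ (hℓU haU)
  obtain ⟨hWT, hWiso, -⟩ := isotropic_of_forall_eval_eq_zero haW fun y hy => (hW y hy).2
  have hbound := two_mul_finrank_add_card_le_of_isotropic (isSymm_hess F a) hdet
    (T := LinearMap.ker (grad F a) ⊓ LinearMap.ker ℓ) (fun i => ⟨hw i, hℓU (hwU i)⟩)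
    (le_inf hWT fun y hy => (hW y hy).1) hWiso
  have := finrank_inf_ker_add_one (hℓT ())
  rw [Fintype.card_fin] at hbound
  omega

theorem third_apply_self_eq_zero_of_hess_apply_self_eq_zero (hσ : Fintype.card σ = 5)
    (hhess : ∀ v, grad F a v = 0 → hess F a v a = 0) {w : Fin 3 → σ → k}
    (hw : ∀ i, grad F a (w i) = 0) (hdet : (gramMatrix (hess F a) w).det ≠ 0) {y : σ → k}
    (hy : grad F a y = 0) (hyy : hess F a y y = 0) : third F a y y y = 0 := by
  obtain ⟨ℓ, hℓ0, hℓa, hℓy⟩ : ∃ ℓ : (σ → k) →ₗ[k] k, ℓ ≠ 0 ∧ ℓ a = 0 ∧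
      ∀ z, ℓ z = 0 → hess F a y z = 0 := by
    by_cases h : hess F a y = 0
    · obtain ⟨ℓ, hℓa, hℓ⟩ := exists_linearForm_not_le_ker (k := k) (ι := Unit)
        (U := Submodule.span k {a}) (W := fun _ => ⊤) fun _ hle => by
          have := Submodule.finrank_mono hle
          have : Module.finrank k (Submodule.span k {a}) ≤ 1 :=
            (finrank_span_le_card _).trans (by simp)
          have : Module.finrank k (σ → k) = 5 := by simp [hσ]
          rw [finrank_top] at *
          omega
      refine ⟨ℓ, ?_, hℓa (Submodule.mem_span_singleton_self a), by simp [h]⟩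
      rintro rfl
      exact hℓ () (by simp)
    · exact ⟨hess F a y, h, hhess y hy, fun z => id⟩
  obtain ⟨W, hWdim, haW, hW⟩ := hsec ℓ hℓ0 hℓa
  obtain ⟨hWT, hWiso, hWthird⟩ := isotropic_of_forall_eval_eq_zero haW fun y hy => (hW y hy).2
  refine hWthird y ?_
  by_contra hyW
  have hiso : ∀ u ∈ W ⊔ Submodule.span k {y}, ∀ v ∈ W ⊔ Submodule.span k {y},
      hess F a u v = 0 := by
    simp only [Submodule.mem_sup, Submodule.mem_span_singleton]
    rintro _ ⟨u, hu, _, ⟨b, rfl⟩, rfl⟩ _ ⟨v, hv, _, ⟨c, rfl⟩, rfl⟩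
    simp [hWiso u hu v hv, hyy, hess_comm F a u y, hℓy u (hW u hu).1, hℓy v (hW v hv).1]
  have hbound := two_mul_finrank_add_card_le_of_isotropic (isSymm_hess F a) hdet
    (T := LinearMap.ker (grad F a)) hw (sup_le hWT ((Submodule.span_singleton_le_iff_mem ..).2 hy))
    hiso
  have hT := finrank_ker_grad_add_one ha
  have := Submodule.finrank_lt_finrank_of_lt (Submodule.lt_sup_iff_notMem.2 hyW)
  rw [Fintype.card_fin] at hbound
  omega

end GramDeterminant

theorem smul_tangentThird_eq_symmProd [IsAlgClosed k] [CharZero k] {d : ℕ}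
    (hF : F.IsHomogeneous d) (hσ : Fintype.card σ = 5) (hsec : HasSectionDivisorsThrough F a)
    {ε u z : σ → k} {w : Fin 3 → σ → k} (hε : grad F a ε ≠ 0)
    (hw : (gramMatrix (tangentHess F a ε) w).det ≠ 0) (hu : tangentHess F a ε u u ≠ 0)
    (hz : tangentHess F a ε u u * tangentHess F a ε z z - tangentHess F a ε u z ^ 2 ≠ 0) :
    (3 * tangentHess F a ε u u ^ 2) • tangentThird F a ε =
      symmProd ((3 * tangentHess F a ε u u) • tangentThird F a ε u u -
        (2 * tangentThird F a ε u u u) • tangentHess F a ε u) (tangentHess F a ε) :=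
  (isSymmTrilinear_tangentThird F a ε).smul_eq_symmProd_of_isotropic (isSymm_tangentHess F a ε)
    (fun y => third_apply_self_eq_zero_of_hess_apply_self_eq_zero (fun h => hε (by simp [h])) hsec
      hσ (fun v => hess_self_eq_zero_of_isHomogeneous v hF)
      (w := fun i => tangentProj F a ε (w i)) (fun i => grad_tangentProj F a ε (w i)) hw
      (grad_tangentProj F a ε y)) hu hz

theorem exists_submodule_not_le_of_mem {V : Type*} [AddCommGroup V] [Module k V]
    [FiniteDimensional k V] {W₁ W₂ : Submodule k V}
    (h₁ : 3 ≤ Module.finrank k W₁) (h₂ : 3 ≤ Module.finrank k W₂)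
    {P : V → Prop} (hP₁ : ∃ x ∈ W₁, P x) (hP₂ : ∃ x ∈ W₂, P x) (a : V) :
    ∃ U : Submodule k V, a ∈ U ∧ (∃ x ∈ W₁ ⊓ U, P x) ∧ (∃ x ∈ W₂ ⊓ U, P x) ∧
      ¬ W₁ ≤ U ∧ ¬ W₂ ≤ U := by
  obtain ⟨p, hp, hPp⟩ := hP₁
  obtain ⟨q, hq, hPq⟩ := hP₂
  have hsmall {r : V} (hr : r ∈ W₁ ⊓ W₂) (hPr : P r) : ∃ U : Submodule k V, a ∈ U ∧
      (∃ x ∈ W₁ ⊓ U, P x) ∧ (∃ x ∈ W₂ ⊓ U, P x) ∧ ¬ W₁ ≤ U ∧ ¬ W₂ ≤ U := by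
    have hU : (Set.range ![a, r]).finrank k ≤ 2 := finrank_range_le_card _
    have hrU : r ∈ Submodule.span k (Set.range ![a, r]) := Submodule.subset_span ⟨1, rfl⟩
    refine ⟨.span k (Set.range ![a, r]), Submodule.subset_span ⟨0, rfl⟩, ⟨r, ⟨hr.1, hrU⟩, hPr⟩,
      ⟨r, ⟨hr.2, hrU⟩, hPr⟩, fun h => ?_, fun h => ?_⟩ <;>
    · have := Submodule.finrank_mono h
      rw [Set.finrank] at hU
      omega
  by_cases hpW : p ∈ W₂
  · exact hsmall ⟨hp, hpW⟩ hPp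
  by_cases hqW : q ∈ W₁
  · exact hsmall ⟨hqW, hq⟩ hPq
  let U := Submodule.span k (Set.range ![a, p, q])
  have hU : Module.finrank k U ≤ 3 := finrank_range_le_card _
  have hpU : p ∈ U := Submodule.subset_span ⟨1, rfl⟩
  have hqU : q ∈ U := Submodule.subset_span ⟨2, rfl⟩
  refine ⟨U, Submodule.subset_span ⟨0, rfl⟩, ⟨p, ⟨hp, hpU⟩, hPp⟩, ⟨q, ⟨hq, hqU⟩, hPq⟩,
    fun h => hqW ?_, fun h => hpW ?_⟩
  · rwa [Submodule.eq_of_le_of_finrank_le h (hU.trans h₁)]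
  · rwa [Submodule.eq_of_le_of_finrank_le h (hU.trans h₂)]

theorem HasSectionDivisorsThrough.forall_eval_eq_zero_or [Infinite k]
    (hsec : HasSectionDivisorsThrough F a) (hσ : 5 ≤ Fintype.card σ) {W₁ W₂ : Submodule k (σ → k)}
    (h₁ : Module.finrank k W₁ + 2 = Fintype.card σ) (h₂ : Module.finrank k W₂ + 2 = Fintype.card σ)
    (hW : ∀ W : Submodule k (σ → k), a ∈ W → (∀ y ∈ W, eval y F = 0) → W ≤ W₁ ∨ W ≤ W₂) :
    (∀ y ∈ W₁, eval y F = 0) ∨ ∀ y ∈ W₂, eval y F = 0 := by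
  by_contra! h
  obtain ⟨U, haU, hU₁, hU₂, hnot₁, hnot₂⟩ :=
    exists_submodule_not_le_of_mem (by omega) (by omega) h.1 h.2 a
  obtain ⟨ℓ, hUℓ, hℓ⟩ := exists_linearForm_not_le_ker (U := U) (W := ![W₁, W₂])
    (Fin.forall_fin_two.2 ⟨hnot₁, hnot₂⟩)
  have hℓ0 : ℓ ≠ 0 := by
    rintro rfl
    exact hℓ 0 (by simp)
  obtain ⟨W, hWdim, haW, hWF⟩ := hsec ℓ hℓ0 (hUℓ haU)
  have hcontra {W' : Submodule k (σ → k)} (hdim : Module.finrank k W' + 2 = Fintype.card σ)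
      (hne : ¬ W' ≤ LinearMap.ker ℓ) (hp : ∃ x ∈ W' ⊓ U, eval x F ≠ 0) : ¬ W ≤ W' := by
    intro hle
    have := finrank_inf_ker_add_one hne
    obtain ⟨x, ⟨hxW', hxU⟩, hx⟩ := hp
    have heq : W = W' ⊓ LinearMap.ker ℓ :=
      Submodule.eq_of_le_of_finrank_eq (le_inf hle fun y hy => (hWF y hy).1) (by omega)
    exact hx (hWF x (heq ▸ ⟨hxW', hUℓ hxU⟩)).2
  exact (hW W haW fun y hy => (hWF y hy).2).elim (hcontra h₁ (hℓ 0) hU₁) (hcontra h₂ (hℓ 1) hU₂)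

theorem finrank_ker_grad_inf_ker_tangentHess_add_two {ε u : σ → k} (hε : grad F a ε ≠ 0)
    (hu : tangentHess F a ε u ≠ 0) :
    Module.finrank k ↑(LinearMap.ker (grad F a) ⊓ LinearMap.ker (tangentHess F a ε u)) + 2 =
      Fintype.card σ := by
  have hT := finrank_ker_grad_add_one (F := F) (a := a) fun h => hε (by simp [h])
  have := finrank_inf_ker_add_one (U := LinearMap.ker (grad F a)) (f := tangentHess F a ε u)
    fun hle => hu <| LinearMap.ext fun y => by
      have hy := hle (grad_tangentProj F a ε y)
      rw [LinearMap.mem_ker, tangentHess_of_grad_eq_zero _ _ (grad_tangentProj F a ε y)] at hy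
      exact (mul_eq_zero.1 hy).resolve_left hε
  omega

-- A quadratic form of rank at most two is a product of two linear forms, and their zero spaces are
-- the only possible linear divisors.
theorem hasLinearDivisorThrough_of_det_tangentHess_eq_zero [IsAlgClosed k] [CharZero k] {d : ℕ}
    (hF : F.IsHomogeneous d) (hσ : 5 ≤ Fintype.card σ) (hsec : HasSectionDivisorsThrough F a)
    (hFa : eval a F = 0) {ε v w : σ → k} (hε : grad F a ε ≠ 0) (hvw : tangentHess F a ε v w ≠ 0)
    (hdet : ∀ w : Fin 3 → σ → k, (gramMatrix (tangentHess F a ε) w).det = 0) :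
    HasLinearDivisorThrough F a := by
  set B := tangentHess F a ε with hB
  have hBsymm : B.IsSymm := isSymm_tangentHess F a ε
  obtain ⟨u₁, u₂, hu⟩ := exists_apply_self_eq_mul_of_det_gramMatrix_eq_zero hBsymm hdet
  have hB0 : ¬ ∀ x, B x x = 0 := fun h => hvw <|
    apply_eq_zero_of_forall_apply_self_eq_zero hBsymm (W := ⊤) (fun x _ => h x) trivial trivial
  have h₁ : B u₁ ≠ 0 := fun h => hB0 fun x => (hu x).trans (by simp [h])
  have h₂ : B u₂ ≠ 0 := fun h => hB0 fun x => (hu x).trans (by simp [h])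
  let W (u : σ → k) : Submodule k (σ → k) := LinearMap.ker (grad F a) ⊓ LinearMap.ker (B u)
  have hdim {u} (hu0 : B u ≠ 0) : Module.finrank k (W u) + 2 = Fintype.card σ :=
    finrank_ker_grad_inf_ker_tangentHess_add_two hε hu0
  have hgrad : grad F a a = 0 := by
    rw [grad_self_of_isHomogeneous a hF, aeval_eq_eval, hFa, mul_zero]
  have haW (u) : a ∈ W u := ⟨hgrad, by
    simp [hB, tangentHess_of_grad_eq_zero _ _ hgrad, hess_self_eq_zero_of_isHomogeneous _ hF]⟩
  have hcases (U : Submodule k (σ → k)) (haU : a ∈ U) (hU : ∀ y ∈ U, eval y F = 0) :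
      U ≤ W u₁ ∨ U ≤ W u₂ := by
    obtain ⟨hUT, hUiso, -⟩ := isotropic_of_forall_eval_eq_zero haU hU
    have : (U : Set (σ → k)) ⊆ LinearMap.ker (B u₁) ∪ LinearMap.ker (B u₂) := fun y hy =>
      mul_eq_zero.1 <| (hu y).symm.trans <| by
        simp [hB, tangentHess_apply, tangentProj_of_grad_eq_zero _ (hUT hy), hUiso y hy y hy]
    exact (AddSubgroupClass.subset_union.1 this).imp (le_inf hUT) (le_inf hUT)
  exact (hsec.forall_eval_eq_zero_or hσ (hdim h₁) (hdim h₂) hcases).elim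
    (fun h => ⟨W u₁, hdim h₁, haW u₁, h⟩) fun h => ⟨W u₂, hdim h₂, haW u₂, h⟩

end LinearDivisors

section Elimination

variable {k R τ : Type*} [Field k] [CommRing R]

theorem exists_pow_idealOfVars_le [IsAlgClosed k] [Finite τ] {J : Ideal (MvPolynomial τ k)}
    (hJ : ∀ p ∈ zeroLocus k J, p = 0) : ∃ N, idealOfVars τ k ^ N ≤ J := by
  refine Ideal.exists_pow_le_of_le_radical_of_fg ?_ (idealOfVars_fg τ k)
  rw [← vanishingIdeal_zeroLocus_eq_radical (K := k), idealOfVars, Ideal.span_le]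
  rintro _ ⟨i, rfl⟩ p hp
  simp [hJ p hp]

variable {I : Ideal (MvPolynomial τ R)} {f : R →+* k} (hf : Function.Surjective f) {N : ℕ}

section

attribute [local instance] MvPolynomial.gradedAlgebra

variable (hI : I.IsHomogeneous (homogeneousSubmodule τ R))
include hI hf

theorem exists_isHomogeneous_mem_map_eq {q : MvPolynomial τ R} (hq : q.IsHomogeneous N)
    (hqI : map f q ∈ I.map (map f)) : ∃ s ∈ I, s.IsHomogeneous N ∧ map f s = map f q := by
  obtain ⟨s, hsI, hs⟩ := (Ideal.mem_map_iff_of_surjective _ (map_surjective f hf)).1 hqI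
  refine ⟨homogeneousComponent N s, (mem_iff_homogeneousComponent_mem hI s).1 hsI N,
    homogeneousComponent_isHomogeneous N s, ?_⟩
  ext e
  have hse : f (coeff e s) = f (coeff e q) := by simpa only [coeff_map] using congr(coeff e $hs)
  simp only [coeff_map, coeff_homogeneousComponent]
  split_ifs with he
  · exact hse
  · rw [hq.coeff_eq_zero he]

-- Nakayama's lemma for the degree `N` part of the quotient by `I`, with respect to `ker f`.
theorem exists_C_mul_X_pow_mem [Finite τ] (hN : idealOfVars τ k ^ N ≤ I.map (map f)) :
    ∃ r, f r = 1 ∧ ∀ i, C r * X i ^ N ∈ I := by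
  let π := (I.restrictScalars R).mkQ
  have hπ {q : MvPolynomial τ R} : π q = 0 ↔ q ∈ I := Submodule.Quotient.mk_eq_zero _
  let Q := (homogeneousSubmodule τ R N).map π
  have degree_eq {q : MvPolynomial τ R} (hq : q.IsHomogeneous N) {e : τ →₀ ℕ}
      (he : coeff e q ≠ 0) : e.degree = N := by
    rw [← hq he, Finsupp.degree_eq_weight_one]
    rfl
  have hQ : Q ≤ RingHom.ker f • Q := by
    rintro _ ⟨q, hq : q.IsHomogeneous N, rfl⟩
    obtain ⟨s, hsI, hs, hsq⟩ := exists_isHomogeneous_mem_map_eq hf hI hq <|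
      hN <| (mem_pow_idealOfVars_iff _ _).2 fun e he =>
        (degree_eq hq fun h => mem_support_iff.1 he (by rw [coeff_map, h, map_zero])).ge
    have hcoeff (e : τ →₀ ℕ) : coeff e (q - s) ∈ RingHom.ker f := by
      simpa only [RingHom.mem_ker, coeff_sub, map_sub, sub_eq_zero, coeff_map]
        using congr(coeff e $hsq.symm)
    rw [← sub_zero (π q), ← hπ.2 hsI, ← map_sub, (q - s).as_sum, map_sum]
    refine Submodule.sum_mem _ fun e he => ?_
    rw [← mul_one (coeff e (q - s)), ← smul_eq_mul, ← smul_monomial, map_smul]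
    exact Submodule.smul_mem_smul (hcoeff e) ⟨_, isHomogeneous_monomial _
      (degree_eq (hq.sub hs) (mem_support_iff.1 he)), rfl⟩
  obtain ⟨r, hr, hrQ⟩ := Submodule.exists_sub_one_mem_and_smul_eq_zero_of_fg_of_le_smul _ Q
    ((homogeneousSubmodule_fg τ R N).map π) hQ
  refine ⟨r, by simpa [RingHom.mem_ker, sub_eq_zero] using hr, fun i => ?_⟩
  rw [← smul_eq_C_mul, ← hπ, map_smul]
  exact hrQ _ ⟨_, isHomogeneous_X_pow i N, rfl⟩

end

attribute [local instance] MvPolynomial.gradedAlgebra in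
include hf in
-- Projective space is proper: the locus where homogeneous equations have a solution is closed.
theorem exists_forall_common_zero_eq_zero [IsAlgClosed k] [Finite τ] {G : Set (MvPolynomial τ R)}
    (hG : ∀ g ∈ G, ∃ m, g.IsHomogeneous m)
    (hfG : ∀ p : τ → k, (∀ g ∈ G, eval₂ f p g = 0) → p = 0) :
    ∃ r, f r = 1 ∧ ∀ (f' : R →+* k), f' r ≠ 0 →
      ∀ p : τ → k, (∀ g ∈ G, eval₂ f' p g = 0) → p = 0 := by
  obtain ⟨N, hN⟩ := exists_pow_idealOfVars_le (J := (Ideal.span G).map (map f)) fun p hp =>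
    hfG p fun g hg => by
      rw [← eval_map, ← aeval_eq_eval]
      exact hp _ (Ideal.mem_map_of_mem _ (Ideal.subset_span hg))
  obtain ⟨r, hr, hrG⟩ := exists_C_mul_X_pow_mem hf (Ideal.homogeneous_span _ _ hG) hN
  refine ⟨r, hr, fun f' hr' p hp => funext fun i => ?_⟩
  have hle : Ideal.span G ≤ RingHom.ker (eval₂Hom f' p) := Ideal.span_le.2 hp
  have hzero : f' r * p i ^ N = 0 := by simpa [RingHom.mem_ker] using hle (hrG i)
  exact eq_zero_of_pow_eq_zero ((mul_eq_zero.1 hzero).resolve_left hr')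

theorem not_dvd_of_eval_ne_zero {R τ : Type*} [CommRing R] {F p : MvPolynomial τ R} {a : τ → R}
    (ha : eval a F = 0) (hp : eval a p ≠ 0) : ¬ F ∣ p :=
  fun h => hp (zero_dvd_iff.1 (ha ▸ map_dvd (eval a) h))

theorem exists_eval_eq_zero_and_eval_ne_zero [IsAlgClosed k] [Finite τ] {F u : MvPolynomial τ k}
    (hF : Irreducible F) (hu : ¬ F ∣ u) : ∃ a, eval a F = 0 ∧ eval a u ≠ 0 := by
  by_contra! h
  have : (Ideal.span {F}).IsPrime := (Ideal.span_singleton_prime hF.ne_zero).2 hF.prime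
  have hmem : u ∈ vanishingIdeal k (zeroLocus k (Ideal.span {F})) := fun x hx => by
    rw [aeval_eq_eval]
    exact h x (by simpa [aeval_eq_eval] using hx F (Ideal.mem_span_singleton_self F))
  rw [IsPrime.vanishingIdeal_zeroLocus] at hmem
  exact hu (Ideal.mem_span_singleton.1 hmem)

end Elimination

section Closure

open Matrix

variable {σ k S T : Type*} [Fintype σ] [DecidableEq σ] [CommRing S] [CommRing T]

/-- If the skew matrix `P` holds the Plücker coordinates of a subspace of codimension two, these
vectors, for varying `i`, `j` and `c`, span that subspace. -/
def pluckerVec (P : Matrix σ σ S) (i j : σ) (c : σ → S) : σ → S :=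
  Pi.single i ((P *ᵥ c) j) - Pi.single j ((P *ᵥ c) i) + P i j • c

theorem map_comp_pluckerVec (f : S →+* T) (P : Matrix σ σ S) (i j : σ) (c : σ → S) :
    f ∘ pluckerVec P i j c = pluckerVec (P.map f) i j (f ∘ c) := by
  ext l
  simp [pluckerVec, RingHom.map_mulVec, Pi.single_apply, apply_ite f]

variable [Field k]

/-- The skew matrices `P` which, when nonzero, give the Plücker coordinates of a linear divisor of
`{F = 0}` through `x`. The Plücker relations are not imposed. -/
structure IsDivisorMatrix (F : MvPolynomial σ k) (x : σ → k) (P : Matrix σ σ k) : Prop where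
  skew : ∀ i j, P i j + P j i = 0
  mulVec_eq_zero : ∀ i, (P *ᵥ x) i = 0
  eval_pluckerVec : ∀ i j c, eval (pluckerVec P i j c) F = 0

theorem IsDivisorMatrix.hasLinearDivisorThrough [CharZero k] {F : MvPolynomial σ k} {x : σ → k}
    {P : Matrix σ σ k} (h : IsDivisorMatrix F x P) (hP : P ≠ 0) : HasLinearDivisorThrough F x := by
  obtain ⟨i, j, hij⟩ : ∃ i j, P i j ≠ 0 := by
    by_contra! h0
    exact hP (Matrix.ext h0)
  let row (i : σ) : (σ → k) →ₗ[k] k := LinearMap.proj i ∘ₗ P.mulVecLin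
  have hi : ¬ ⊤ ≤ LinearMap.ker (row i) := fun hle => hij <| by
    simpa [row] using hle (x := Pi.single j 1) trivial
  have hj : ¬ LinearMap.ker (row i) ≤ LinearMap.ker (row j) := fun hle => hij <| by
    have hii : P i i = 0 := self_eq_neg.1 (eq_neg_of_add_eq_zero_left (h.skew i i))
    have hji : P j i = 0 := by
      simpa [row] using hle (x := Pi.single i 1) (by simpa [row] using hii)
    simpa [hji] using h.skew i j
  have hdim := finrank_inf_ker_add_one hi
  rw [top_inf_eq, finrank_top, Module.finrank_fintype_fun_eq_card,
    ← finrank_inf_ker_add_one hj] at hdim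
  refine ⟨LinearMap.ker (row i) ⊓ LinearMap.ker (row j), hdim,
    ⟨h.mulVec_eq_zero i, h.mulVec_eq_zero j⟩, fun y ⟨hyi, hyj⟩ => ?_⟩
  have hyi : (P *ᵥ y) i = 0 := hyi
  have hyj : (P *ᵥ y) j = 0 := hyj
  simpa [pluckerVec, mulVec_smul, hyi, hyj, hij] using h.eval_pluckerVec i j ((P i j)⁻¹ • y)

theorem exists_linearForms_eq_ker_inf_ker {V : Type*} [AddCommGroup V] [Module k V]
    [FiniteDimensional k V] {W : Submodule k V}
    (hW : Module.finrank k W + 2 = Module.finrank k V) :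
    ∃ l m : V →ₗ[k] k, W = LinearMap.ker l ⊓ LinearMap.ker m ∧ l ≠ 0 ∧ ∃ s, l s = 0 ∧ m s ≠ 0 := by
  obtain ⟨t, ht⟩ : ∃ t, t ∉ W := by
    by_contra! h
    rw [(Submodule.eq_top_iff').2 h, finrank_top] at hW
    omega
  obtain ⟨l, hlt, hlW⟩ := Submodule.exists_le_ker_of_notMem ht
  have hl : l ≠ 0 := by
    rintro rfl
    exact hlt rfl
  have hdim := Module.Dual.finrank_ker_add_one_of_ne_zero hl
  obtain ⟨s, hsl, hsW⟩ := SetLike.not_le_iff_exists.1 fun h : LinearMap.ker l ≤ W => by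
    have := Submodule.finrank_mono h
    omega
  obtain ⟨m, hms, hmW⟩ := Submodule.exists_le_ker_of_notMem hsW
  have hdim' := finrank_inf_ker_add_one (f := m) fun h => hms (h hsl)
  exact ⟨l, m, Submodule.eq_of_le_of_finrank_eq (le_inf hlW hmW) (by omega), hl, s, hsl, hms⟩

theorem HasLinearDivisorThrough.exists_isDivisorMatrix {F : MvPolynomial σ k} {x : σ → k}
    (h : HasLinearDivisorThrough F x) : ∃ P ≠ 0, IsDivisorMatrix F x P := by
  obtain ⟨W, hdim, hx, hWF⟩ := h
  rw [← Module.finrank_fintype_fun_eq_card k] at hdim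
  obtain ⟨l, m, rfl, hl, s, hs, hms⟩ := exists_linearForms_eq_ker_inf_ker hdim
  let e (i : σ) : σ → k := Pi.single i 1
  let P : Matrix σ σ k := of fun i j => l (e i) * m (e j) - l (e j) * m (e i)
  have apply_eq_sum (f : (σ → k) →ₗ[k] k) (c : σ → k) : f c = ∑ i, f (e i) * c i := by
    conv_lhs => rw [pi_eq_sum_univ' c]
    simp [e, mul_comm]
  have hP (c : σ → k) (i : σ) : (P *ᵥ c) i = l (e i) * m c - l c * m (e i) := by
    rw [apply_eq_sum m c, apply_eq_sum l c, Finset.mul_sum, Finset.sum_mul,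
      ← Finset.sum_sub_distrib, mulVec, dotProduct]
    exact Finset.sum_congr rfl fun j _ => by simp only [P, of_apply]; ring
  have hsingle (i : σ) (r : k) : (Pi.single i r : σ → k) = r • e i := by simp [e, ← Pi.single_smul]
  refine ⟨P, fun hP0 => hl ?_, fun i j => by simp [P], fun i => ?_, fun i j c => hWF _ ?_⟩
  · ext i
    simpa [hP0, hs, hms, e] using (hP s i).symm
  · rw [hP, show l x = 0 from hx.1, show m x = 0 from hx.2]
    ring
  · simp only [pluckerVec, hsingle, hP, P, of_apply, Submodule.mem_inf, LinearMap.mem_ker, map_add,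
      map_sub, map_smul, smul_eq_mul]
    constructor <;> ring

/-- The equations of `IsDivisorMatrix F x P`, with the entries of `P` as variables and polynomials
in `x` as coefficients. -/
noncomputable def divisorEquations (F : MvPolynomial σ k) :
    Set (MvPolynomial (σ × σ) (MvPolynomial σ k)) :=
  let P := mvPolynomialX σ σ (MvPolynomial σ k)
  {g | ∃ i j, g = P i j + P j i} ∪ {g | ∃ i, g = (P *ᵥ (C ∘ X)) i} ∪
    {g | ∃ i j, ∃ c : σ → k, g = aeval (pluckerVec P i j (C ∘ C ∘ c)) F}

theorem isDivisorMatrix_iff_forall_divisorEquations {F : MvPolynomial σ k} {x : σ → k}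
    {P : Matrix σ σ k} : IsDivisorMatrix F x P ↔
      ∀ g ∈ divisorEquations F, eval₂ (eval x) (fun ij => P ij.1 ij.2) g = 0 := by
  let ev : MvPolynomial (σ × σ) (MvPolynomial σ k) →ₐ[k] k :=
    { eval₂Hom (eval x) (fun ij => P ij.1 ij.2) with
      commutes' := fun c => by simp [IsScalarTower.algebraMap_apply k (MvPolynomial σ k)
        (MvPolynomial (σ × σ) (MvPolynomial σ k)), algebraMap_eq] }
  have ev_P : (mvPolynomialX σ σ (MvPolynomial σ k)).map ev = P :=
    mvPolynomialX_map_eval₂ (eval x) P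
  have ev_C (p : MvPolynomial σ k) : ev (C p) = eval x p := eval₂_C ..
  have ev_mulVec (i : σ) : ev ((mvPolynomialX σ σ (MvPolynomial σ k) *ᵥ (C ∘ X)) i) =
      (P *ᵥ x) i := by
    conv_rhs => rw [← ev_P]
    rw [← RingHom.coe_coe ev, RingHom.map_mulVec]
    congr! 2
    ext i
    simp [ev_C]
  have ev_pluckerVec (i j : σ) (c : σ → k) :
      ev (aeval (pluckerVec (mvPolynomialX σ σ _) i j (C ∘ C ∘ c)) F) =
        eval (pluckerVec P i j c) F := by
    have hc : ev ∘ C ∘ C ∘ c = c := funext fun l => (ev_C _).trans (eval_C _)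
    have hvec := map_comp_pluckerVec ev.toRingHom (mvPolynomialX σ σ _) i j (C ∘ C ∘ c)
    rw [comp_aeval_apply, ← aeval_eq_eval]
    exact congr(aeval $(hvec.trans (congr(pluckerVec $ev_P i j $hc))) F)
  refine ⟨fun h => ?_, fun h => ⟨fun i j => ?_, fun i => ?_, fun i j c => ?_⟩⟩
  · rintro g ((⟨i, j, rfl⟩ | ⟨i, rfl⟩) | ⟨i, j, c, rfl⟩)
    · simpa using h.skew i j
    · exact (ev_mulVec i).trans (h.mulVec_eq_zero i)
    · exact (ev_pluckerVec i j c).trans (h.eval_pluckerVec i j c)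
  · simpa using h _ (.inl (.inl ⟨i, j, rfl⟩))
  · exact (ev_mulVec i).symm.trans (h _ (.inl (.inr ⟨i, rfl⟩)))
  · exact (ev_pluckerVec i j c).symm.trans (h _ (.inr ⟨i, j, c, rfl⟩))

theorem exists_isHomogeneous_of_mem_divisorEquations {F : MvPolynomial σ k} {d : ℕ}
    (hF : F.IsHomogeneous d) {g : MvPolynomial (σ × σ) (MvPolynomial σ k)}
    (hg : g ∈ divisorEquations F) : ∃ m, g.IsHomogeneous m := by
  have hP (i j : σ) : (mvPolynomialX σ σ (MvPolynomial σ k) i j).IsHomogeneous 1 :=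
    isHomogeneous_X _ _
  have hmulVec (c : σ → MvPolynomial σ k) (i : σ) :
      ((mvPolynomialX σ σ (MvPolynomial σ k) *ᵥ (C ∘ c)) i).IsHomogeneous 1 :=
    .sum _ _ _ fun j _ => (hP i j).mul (isHomogeneous_C _ _)
  have hsingle {p : MvPolynomial (σ × σ) (MvPolynomial σ k)} (hp : p.IsHomogeneous 1) (i l : σ) :
      ((Pi.single i p : σ → _) l).IsHomogeneous 1 := by
    rw [Pi.single_apply]
    split_ifs
    exacts [hp, isHomogeneous_zero ..]
  obtain (⟨i, j, rfl⟩ | ⟨i, rfl⟩) | ⟨i, j, c, rfl⟩ := hg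
  · exact ⟨1, (hP i j).add (hP j i)⟩
  · exact ⟨1, hmulVec X i⟩
  · refine ⟨1 * d, hF.eval₂ _ _ (fun r => isHomogeneous_C _ _) fun l => ?_⟩
    exact ((hsingle (hmulVec _ j) i l).sub (hsingle (hmulVec _ i) j l)).add
      ((hP i j).mul (isHomogeneous_C _ _))

omit [DecidableEq σ] in
theorem hasLinearDivisorThrough_of_generic [IsAlgClosed k] [CharZero k] {F u : MvPolynomial σ k}
    {d : ℕ} (hF : F.IsHomogeneous d) (hirr : Irreducible F) (hu : ¬ F ∣ u)
    (h : ∀ a, eval a F = 0 → eval a u ≠ 0 → HasLinearDivisorThrough F a) {x : σ → k}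
    (hx : eval x F = 0) : HasLinearDivisorThrough F x := by
  classical
  by_contra hcon
  obtain ⟨r, hrx, hr⟩ := exists_forall_common_zero_eq_zero (f := eval x)
    (fun c => ⟨C c, eval_C c⟩) (fun g => exists_isHomogeneous_of_mem_divisorEquations hF)
    fun p hp => by
      by_contra hp0
      refine hcon ((isDivisorMatrix_iff_forall_divisorEquations
        (P := of fun i j => p (i, j))).2 hp |>.hasLinearDivisorThrough fun hP => hp0 ?_)
      exact funext fun ij => congr_fun₂ hP ij.1 ij.2
  obtain ⟨a, ha, hau⟩ := exists_eval_eq_zero_and_eval_ne_zero hirr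
    (hirr.prime.not_dvd_mul (not_dvd_of_eval_ne_zero hx (hrx ▸ one_ne_zero)) hu)
  rw [map_mul] at hau
  obtain ⟨P, hP0, hP⟩ := (h a ha (right_ne_zero_of_mul hau)).exists_isDivisorMatrix
  refine hP0 (Matrix.ext fun i j => ?_)
  exact congr_fun (hr (eval a) (left_ne_zero_of_mul hau) _
    (isDivisorMatrix_iff_forall_divisorEquations.1 hP)) (i, j)

end Closure

theorem not_dvd_of_isHomogeneous_of_lt {σ k : Type*} [Field k] {F p : MvPolynomial σ k} {m d : ℕ}
    (hF : F.IsHomogeneous d) (hF0 : F ≠ 0) (hp : p.IsHomogeneous m) (hp0 : p ≠ 0) (hmd : m < d) :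
    ¬ F ∣ p := by
  rintro ⟨q, rfl⟩
  have hdeg := totalDegree_mul_of_isDomain hF0 (right_ne_zero_of_mul hp0)
  rw [hF.totalDegree hF0, hp.totalDegree hp0] at hdeg
  omega

theorem dvd_of_forall_eval_eq_zero {σ k : Type*} [Field k] [IsAlgClosed k] [Finite σ]
    {F u p : MvPolynomial σ k} (hirr : Irreducible F) (hu : ¬ F ∣ u)
    (h : ∀ a, eval a F = 0 → eval a u ≠ 0 → eval a p = 0) : F ∣ p := by
  by_contra hp
  obtain ⟨a, ha, hup⟩ := exists_eval_eq_zero_and_eval_ne_zero hirr (hirr.prime.not_dvd_mul hu hp)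
  rw [map_mul] at hup
  exact right_ne_zero_of_mul hup (h a ha (left_ne_zero_of_mul hup))

section GenericZero

universe u v

variable {σ : Type u} {k : Type v} [Field k]

/-- A generic point of `{F = 0}`: a zero of `F` with coordinates in an extension field `K`, which
becomes the function field of the affine cone over `{F = 0}`. -/
structure IsGenericZero {K : Type*} [Field K] [Algebra k K] (F : MvPolynomial σ k) (x : σ → K) :
    Prop where
  aeval_eq_zero_iff : ∀ p, aeval x p = 0 ↔ F ∣ p
  adjoin_eq_top : IntermediateField.adjoin k (Set.range x) = ⊤

theorem exists_isGenericZero {F : MvPolynomial σ k} (hF : Irreducible F) :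
    ∃ (K : Type (max u v)) (_ : Field K) (_ : Algebra k K) (x : σ → K), IsGenericZero F x := by
  have : (Ideal.span {F}).IsPrime := (Ideal.span_singleton_prime hF.ne_zero).2 hF.prime
  let A := MvPolynomial σ k ⧸ Ideal.span {F}
  let ι : MvPolynomial σ k →ₐ[k] FractionRing A :=
    (IsScalarTower.toAlgHom k A (FractionRing A)).comp (Ideal.Quotient.mkₐ k _)
  have hι : aeval (ι ∘ X) = ι := (aeval_unique ι).symm
  refine ⟨FractionRing A, inferInstance, inferInstance, ι ∘ X, fun p => ?_, ?_⟩
  · rw [hι, ← Ideal.mem_span_singleton, ← Ideal.Quotient.eq_zero_iff_mem]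
    exact IsFractionRing.to_map_eq_zero_iff (R := A) (K := FractionRing A)
  · refine eq_top_iff.2 fun r _ => (IntermediateField.mem_adjoin_range_iff ..).2 ?_
    obtain ⟨a, b, -, rfl⟩ := IsFractionRing.div_surjective (A := A) r
    obtain ⟨p, rfl⟩ := Ideal.Quotient.mk_surjective a
    obtain ⟨q, rfl⟩ := Ideal.Quotient.mk_surjective b
    exact ⟨p, q, by rw [hι]; rfl⟩

namespace IsGenericZero

variable {K : Type*} [Field K] [Algebra k K] {F : MvPolynomial σ k} {x : σ → K}
  (hx : IsGenericZero F x)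
include hx

theorem aeval_ne_zero {a : σ → k} (ha : eval a F = 0) {p : MvPolynomial σ k}
    (hp : aeval a p ≠ 0) : aeval x p ≠ 0 :=
  mt (hx.aeval_eq_zero_iff p).1 (not_dvd_of_eval_ne_zero ha hp)

theorem exists_mul_aeval_eq (r : K) :
    ∃ p q : MvPolynomial σ k, aeval x q ≠ 0 ∧ r * aeval x q = aeval x p := by
  obtain ⟨p, q, rfl⟩ := (IntermediateField.mem_adjoin_range_iff k x r).1
    (hx.adjoin_eq_top ▸ IntermediateField.mem_top)
  by_cases hq : aeval x q = 0
  · exact ⟨0, 1, by simp, by simp [hq]⟩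
  · exact ⟨p, q, hq, div_mul_cancel₀ _ hq⟩

theorem derivation_ext {D D' : Derivation k K K} (h : D ∘ x = D' ∘ x) : D = D' := by
  ext r
  refine IntermediateField.adjoin_induction k (p := fun r _ => D r = D' r) ?_
    (by simp) (fun r s _ _ hr hs => ?_) (fun r _ hr => ?_) (fun r s _ _ hr hs => ?_)
    (hx.adjoin_eq_top ▸ IntermediateField.mem_top (x := r))
  · rintro _ ⟨i, rfl⟩
    exact congr_fun h i
  · rw [map_add, map_add, hr, hs]
  · rw [Derivation.leibniz_inv, Derivation.leibniz_inv, hr]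
  · rw [Derivation.leibniz, Derivation.leibniz, hr, hs]

theorem essFiniteType [Finite σ] : Algebra.EssFiniteType k K := by
  have hfg : (⊤ : IntermediateField k K).FG :=
    hx.adjoin_eq_top ▸ IntermediateField.fg_adjoin_of_finite (Set.finite_range x)
  exact (Algebra.EssFiniteType.iff_of_algEquiv IntermediateField.topEquiv).1
    (IntermediateField.essFiniteType_iff.2 hfg)

variable [Fintype σ]

theorem grad_eq_of_aeval_eq {ξ : σ → K} (hξ : grad F x ξ = 0) {p q : MvPolynomial σ k}
    (hpq : aeval x p = aeval x q) : grad p x ξ = grad q x ξ := by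
  obtain ⟨s, hs⟩ := (hx.aeval_eq_zero_iff (p - q)).1 (by rw [map_sub, hpq, sub_self])
  rw [sub_eq_iff_eq_add.1 hs, grad_add, grad_mul, hξ, (hx.aeval_eq_zero_iff F).2 dvd_rfl,
    mul_zero, zero_mul, zero_add, zero_add]

-- By the quotient rule, `δ` has to be the value at `r` of a derivation that maps `x` to `ξ`.
theorem exists_forall_mul_aeval_eq_grad_sub {ξ : σ → K} (hξ : grad F x ξ = 0) (r : K) :
    ∃ δ : K, ∀ p q : MvPolynomial σ k, r * aeval x q = aeval x p →
      δ * aeval x q = grad p x ξ - r * grad q x ξ := by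
  obtain ⟨p₀, q₀, hq₀, hr⟩ := hx.exists_mul_aeval_eq r
  refine ⟨(grad p₀ x ξ - r * grad q₀ x ξ) / aeval x q₀, fun p q hpq => ?_⟩
  have hcross := hx.grad_eq_of_aeval_eq hξ (p := p₀ * q) (q := p * q₀) (by
    rw [map_mul, map_mul, ← hr, ← hpq]; ring)
  rw [grad_mul, grad_mul, ← hr, ← hpq] at hcross
  rw [div_mul_eq_mul_div, div_eq_iff hq₀]
  linear_combination hcross

theorem exists_derivation {ξ : σ → K} (hξ : grad F x ξ = 0) :
    ∃ D : Derivation k K K, D ∘ x = ξ := by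
  choose δ hδ using hx.exists_forall_mul_aeval_eq_grad_sub hξ
  have δ_aeval (p : MvPolynomial σ k) : δ (aeval x p) = grad p x ξ := by
    simpa [grad_apply] using hδ _ p 1 (by simp)
  have δ_add (r s : K) : δ (r + s) = δ r + δ s := by
    obtain ⟨p, q, hq, hr⟩ := hx.exists_mul_aeval_eq r
    obtain ⟨p', q', hq', hs⟩ := hx.exists_mul_aeval_eq s
    have hrs := hδ (r + s) (p * q' + p' * q) (q * q') (by
      simp only [map_add, map_mul, ← hr, ← hs]; ring)
    rw [grad_add, grad_mul, grad_mul, grad_mul, map_mul, ← hr, ← hs] at hrs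
    refine mul_right_cancel₀ (mul_ne_zero hq hq') ?_
    linear_combination hrs - aeval x q' * hδ r p q hr - aeval x q * hδ s p' q' hs
  have δ_mul (r s : K) : δ (r * s) = r * δ s + s * δ r := by
    obtain ⟨p, q, hq, hr⟩ := hx.exists_mul_aeval_eq r
    obtain ⟨p', q', hq', hs⟩ := hx.exists_mul_aeval_eq s
    have hrs := hδ (r * s) (p * p') (q * q') (by simp only [map_mul, ← hr, ← hs]; ring)
    rw [grad_mul, grad_mul, map_mul, ← hr, ← hs] at hrs
    refine mul_right_cancel₀ (mul_ne_zero hq hq') ?_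
    linear_combination hrs - s * aeval x q' * hδ r p q hr - r * aeval x q * hδ s p' q' hs
  have δ_algebraMap (c : k) : δ (algebraMap k K c) = 0 := by
    simpa [grad_apply] using δ_aeval (C c)
  classical
  refine ⟨.mk' { toFun := δ, map_add' := δ_add, map_smul' := fun c r => ?_ } δ_mul, ?_⟩
  · rw [Algebra.smul_def, δ_mul, δ_algebraMap, mul_zero, add_zero, Algebra.smul_def]; rfl
  · ext i
    simpa [grad_apply, pderiv_X, Pi.single_apply, apply_ite (aeval x)] using δ_aeval (X i)

end IsGenericZero

end GenericZero

section ConstVec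

variable {σ k : Type*} [CommRing k]

/-- A vector over `k`, seen as a vector over a `k`-algebra `R`. -/
def constVec (R : Type*) [CommRing R] [Algebra k R] (v : σ → k) : σ → R := algebraMap k R ∘ v

@[simp]
theorem constVec_self (v : σ → k) : constVec k v = v := rfl

@[simp]
theorem derivation_comp_constVec {R : Type*} [CommRing R] [Algebra k R] (D : Derivation k R R)
    (v : σ → k) : D ∘ constVec R v = 0 :=
  funext fun i => D.map_algebraMap (v i)

variable {R : Type*} [CommRing R] [Algebra k R] (x : σ → R) (ε v w y : σ → k)

theorem aeval_comp_constVec : aeval x ∘ constVec (MvPolynomial σ k) v = constVec R v :=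
  funext fun i => aeval_C x (v i)

theorem aeval_comp_X : aeval x ∘ (X : σ → MvPolynomial σ k) = x := funext (aeval_X x)

theorem constVec_single [DecidableEq σ] (i : σ) :
    constVec R (Pi.single i (1 : k)) = Pi.single i 1 := by
  ext j
  simp [constVec, Pi.single_apply, apply_ite (algebraMap k R)]

variable (k) in
theorem sum_smul_constVec_single [Fintype σ] [DecidableEq σ] (y : σ → R) :
    ∑ i, y i • constVec R (Pi.single i (1 : k)) = y := by
  simp only [constVec_single]
  exact (pi_eq_sum_univ' y).symm

variable (k) in
theorem apply_eq_sum_constVec_single [Fintype σ] [DecidableEq σ] (f : (σ → R) →ₗ[R] R)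
    (y : σ → R) : f y = ∑ i, f (constVec R (Pi.single i (1 : k))) * y i := by
  conv_lhs => rw [← sum_smul_constVec_single k y, map_sum]
  simp only [map_smul, smul_eq_mul, mul_comm]

variable [Fintype σ] (F : MvPolynomial σ k)

theorem aeval_grad :
    aeval x (grad F X (constVec (MvPolynomial σ k) ε)) = grad F x (constVec R ε) := by
  rw [map_grad, aeval_comp_X, aeval_comp_constVec]

theorem aeval_tangentHess :
    aeval x (tangentHess F X (constVec (MvPolynomial σ k) ε) (constVec (MvPolynomial σ k) v)
      (constVec (MvPolynomial σ k) w)) =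
      tangentHess F x (constVec R ε) (constVec R v) (constVec R w) := by
  rw [map_tangentHess, aeval_comp_X]
  simp only [aeval_comp_constVec]

theorem aeval_tangentThird :
    aeval x (tangentThird F X (constVec (MvPolynomial σ k) ε) (constVec (MvPolynomial σ k) v)
      (constVec (MvPolynomial σ k) w) (constVec (MvPolynomial σ k) y)) =
      tangentThird F x (constVec R ε) (constVec R v) (constVec R w) (constVec R y) := by
  rw [map_tangentThird, aeval_comp_X]
  simp only [aeval_comp_constVec]

theorem aeval_det_gramMatrix_tangentHess {ι : Type*} [Fintype ι] [DecidableEq ι]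
    (w : ι → σ → k) :
    aeval x (gramMatrix (tangentHess F X (constVec (MvPolynomial σ k) ε))
      fun i => constVec (MvPolynomial σ k) (w i)).det =
      (gramMatrix (tangentHess F x (constVec R ε)) fun i => constVec R (w i)).det := by
  rw [AlgHom.map_det]
  congr 1
  ext i j
  exact aeval_tangentHess ..

end ConstVec

section ImplicitGraph

variable {σ K k : Type*} [Fintype σ] [CommRing k] [Field K] [Algebra k K]

/-- The slopes at `x` of the hypersurface `{F = 0}`, seen as a graph over the directions
complementary to `ε`; `graphSlope F x ε ε = -1`. -/
noncomputable def graphSlope (F : MvPolynomial σ k) (x ε : σ → K) : (σ → K) →ₗ[K] K :=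
  -(grad F x ε)⁻¹ • grad F x

/-- The tangent vector of the graph that lies over `v`. -/
noncomputable def graphVec (F : MvPolynomial σ k) (x ε : σ → K) : (σ → K) →ₗ[K] (σ → K) :=
  LinearMap.id + (graphSlope F x ε).smulRight ε

/-- The second derivative of the function whose graph is `{F = 0}`. -/
noncomputable def graphHess (F : MvPolynomial σ k) (x ε : σ → K) :
    LinearMap.BilinForm K (σ → K) :=
  -(grad F x ε)⁻¹ • (hess F x).compl₁₂ (graphVec F x ε) (graphVec F x ε)

variable {F : MvPolynomial σ k} {x ε : σ → K} (v w y : σ → K)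

theorem graphVec_apply : graphVec F x ε v = v + graphSlope F x ε v • ε := rfl

theorem graphHess_comm : graphHess F x ε v w = graphHess F x ε w v := by
  simp [graphHess, hess_comm _ _ (graphVec F x ε v)]

theorem graphSlope_of_grad_eq_zero (hv : grad F x v = 0) : graphSlope F x ε v = 0 := by
  simp [graphSlope, hv]

theorem graphVec_of_grad_eq_zero (hv : grad F x v = 0) : graphVec F x ε v = v := by
  simp [graphVec_apply, graphSlope_of_grad_eq_zero v hv]

theorem graphHess_self_of_isHomogeneous {d : ℕ} (hF : F.IsHomogeneous d) (hx : grad F x x = 0) :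
    graphHess F x ε x x = 0 := by
  simp [graphHess, graphVec_of_grad_eq_zero x hx, hess_self_of_isHomogeneous x x hF, hx]

variable (hε : grad F x ε ≠ 0)
include hε

theorem grad_mul_graphSlope : grad F x ε * graphSlope F x ε v = -grad F x v := by
  simp [graphSlope, hε]

theorem graphSlope_self : graphSlope F x ε ε = -1 := by simp [graphSlope, hε]

theorem graphVec_self : graphVec F x ε ε = 0 := by simp [graphVec_apply, graphSlope_self hε]

theorem graphHess_self_left : graphHess F x ε ε v = 0 := by
  simp [graphHess, graphVec_self hε]

theorem grad_graphVec : grad F x (graphVec F x ε v) = 0 := by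
  rw [graphVec_apply, map_add, map_smul, smul_eq_mul, mul_comm, grad_mul_graphSlope v hε,
    add_neg_cancel]

theorem grad_mul_graphHess : grad F x ε * graphHess F x ε v w =
    -hess F x (graphVec F x ε v) (graphVec F x ε w) := by
  simp [graphHess, hε]

theorem tangentProj_eq_smul_graphVec :
    tangentProj F x ε v = grad F x ε • graphVec F x ε v := by
  rw [tangentProj_apply, graphVec_apply, smul_add, smul_smul, grad_mul_graphSlope v hε, neg_smul,
    sub_eq_add_neg]

theorem tangentHess_eq_mul_graphHess :
    tangentHess F x ε v w = -grad F x ε ^ 3 * graphHess F x ε v w := by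
  rw [tangentHess_apply, tangentProj_eq_smul_graphVec v hε, tangentProj_eq_smul_graphVec w hε]
  simp only [map_smul, LinearMap.smul_apply, smul_eq_mul]
  linear_combination grad F x ε ^ 2 * grad_mul_graphHess v w hε

theorem tangentThird_eq_mul_third : tangentThird F x ε v w y =
    grad F x ε ^ 3 * third F x (graphVec F x ε v) (graphVec F x ε w) (graphVec F x ε y) := by
  rw [tangentThird_apply, tangentProj_eq_smul_graphVec v hε, tangentProj_eq_smul_graphVec w hε,
    tangentProj_eq_smul_graphVec y hε]
  simp only [map_smul, LinearMap.smul_apply, smul_eq_mul]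
  ring

variable {v w y} in
theorem third_graphVec_of_tangentThird_eq {θ : (σ → K) →ₗ[K] K}
    (h : tangentThird F x ε v w y = symmProd θ (tangentHess F x ε) v w y) :
    third F x (graphVec F x ε v) (graphVec F x ε w) (graphVec F x ε y) =
      -symmProd θ (graphHess F x ε) v w y := by
  refine mul_left_cancel₀ (pow_ne_zero 3 hε) ?_
  rw [← tangentThird_eq_mul_third v w y hε, h]
  simp only [symmProd_apply, tangentHess_eq_mul_graphHess _ _ hε]
  ring

end ImplicitGraph

section TangentFrame

variable {σ k K : Type*} [Fintype σ] [Field k] [Field K] [Algebra k K]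

/-- Derivations of the function field along the vectors tangent to the graph `{F = 0}` at its
generic point `x`: `D v` moves `x` in the direction of the tangent vector that lies over `v`. -/
structure IsTangentFrame (F : MvPolynomial σ k) (x : σ → K) (ε : σ → k)
    (D : (σ → k) → Derivation k K K) : Prop where
  isGenericZero : IsGenericZero F x
  grad_ne_zero : grad F x (constVec K ε) ≠ 0
  comp_eq : ∀ v, D v ∘ x = graphVec F x (constVec K ε) (constVec K v)

theorem IsGenericZero.exists_isTangentFrame {F : MvPolynomial σ k} {x : σ → K} {ε : σ → k}
    (hx : IsGenericZero F x) (hε : grad F x (constVec K ε) ≠ 0) : ∃ D, IsTangentFrame F x ε D := by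
  choose D hD using fun v : σ → k => hx.exists_derivation (grad_graphVec (constVec K v) hε)
  exact ⟨D, hx, hε, hD⟩

namespace IsTangentFrame

variable {F : MvPolynomial σ k} {x : σ → K} {ε : σ → k} {D : (σ → k) → Derivation k K K}
  (hD : IsTangentFrame F x ε D) (v w l : σ → k)
include hD

theorem grad_self_eq_zero {d : ℕ} (hF : F.IsHomogeneous d) : grad F x x = 0 := by
  rw [grad_self_of_isHomogeneous x hF, (hD.isGenericZero.aeval_eq_zero_iff F).2 dvd_rfl, mul_zero]

theorem derivation_grad_const : D v (grad F x (constVec K w)) =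
    hess F x (constVec K w) (graphVec F x (constVec K ε) (constVec K v)) := by
  rw [derivation_grad, hD.comp_eq, derivation_comp_constVec, map_zero, add_zero]

theorem derivation_graphSlope : D v (graphSlope F x (constVec K ε) (constVec K w)) =
    graphHess F x (constVec K ε) (constVec K v) (constVec K w) := by
  have hslope := congrArg (D v) (grad_mul_graphSlope (constVec K w) hD.grad_ne_zero)
  rw [map_neg, Derivation.leibniz, hD.derivation_grad_const, hD.derivation_grad_const, smul_eq_mul,
    smul_eq_mul] at hslope
  have hhess := grad_mul_graphHess (constVec K v) (constVec K w) hD.grad_ne_zero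
  rw [graphVec_apply (constVec K w), map_add, map_smul, smul_eq_mul, hess_comm, hess_comm _ _ _
    (constVec K ε)] at hhess
  refine mul_left_cancel₀ hD.grad_ne_zero ?_
  linear_combination hslope - hhess

theorem derivation_comp_graphVec : D v ∘ graphVec F x (constVec K ε) (constVec K w) =
    graphHess F x (constVec K ε) (constVec K v) (constVec K w) • constVec K ε := by
  ext i
  have hw := congr_fun (derivation_comp_constVec (D v) w) i
  have hε := congr_fun (derivation_comp_constVec (D v) ε) i
  simp only [Function.comp_apply, Pi.zero_apply] at hw hε
  simp [graphVec_apply, hD.derivation_graphSlope, hw, hε, mul_comm]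

theorem derivation_comm (r : K) : D v (D w r) = D w (D v r) := by
  have hcomm : ⁅D v, D w⁆ = 0 := hD.isGenericZero.derivation_ext <| funext fun i => by
    have hvw (v w) := (congr_arg (D v) (congr_fun (hD.comp_eq w) i)).trans
      (congr_fun (hD.derivation_comp_graphVec v w) i)
    simp only [Function.comp_apply, Pi.smul_apply] at hvw
    simp [Derivation.commutator_apply, hvw, graphHess_comm (constVec K v)]
  exact sub_eq_zero.1 ((Derivation.commutator_apply ..).symm.trans (DFunLike.congr_fun hcomm r))

theorem grad_mul_derivation_graphHess :
    letI e := constVec K ε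
    letI τ := fun v => graphVec F x e (constVec K v)
    letI h := fun v w => graphHess F x e (constVec K v) (constVec K w)
    grad F x e * D l (h v w) = -(third F x (τ v) (τ w) (τ l) + h v w * hess F x e (τ l)
      + h l v * hess F x e (τ w) + h l w * hess F x e (τ v)) := by
  have hhess := congrArg (D l) (grad_mul_graphHess (constVec K v) (constVec K w) hD.grad_ne_zero)
  rw [map_neg, derivation_hess, Derivation.leibniz, hD.derivation_grad_const,
    hD.derivation_comp_graphVec, hD.derivation_comp_graphVec, hD.comp_eq] at hhess
  simp only [map_smul, LinearMap.smul_apply, smul_eq_mul] at hhess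
  rw [hess_comm _ _ _ (constVec K ε)] at hhess
  linear_combination hhess

theorem exists_derivation_graphHess_eq {θ : (σ → K) →ₗ[K] K} (hθ : ∀ v w y : σ → k,
      tangentThird F x (constVec K ε) (constVec K v) (constVec K w) (constVec K y) =
        symmProd θ (tangentHess F x (constVec K ε)) (constVec K v) (constVec K w) (constVec K y)) :
    letI h := fun v w => graphHess F x (constVec K ε) (constVec K v) (constVec K w)
    ∃ φ : (σ → K) →ₗ[K] K, ∀ l v w, D l (h v w) =
      φ (constVec K l) * h v w + φ (constVec K v) * h l w + φ (constVec K w) * h l v := by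
  refine ⟨(grad F x (constVec K ε))⁻¹ •
      (θ - hess F x (constVec K ε) ∘ₗ graphVec F x (constVec K ε)),
    fun l v w => ?_⟩
  have he := hD.grad_ne_zero
  refine mul_left_cancel₀ he ?_
  rw [hD.grad_mul_derivation_graphHess, third_graphVec_of_tangentThird_eq he (hθ v w l),
    symmProd_apply, graphHess_comm (constVec K w), graphHess_comm (constVec K v) (constVec K l)]
  simp only [LinearMap.smul_apply, LinearMap.sub_apply, LinearMap.comp_apply, smul_eq_mul]
  field_simp
  ring

variable [IsAlgClosed k] [CharZero k]

-- Tangent vectors at `x` are combinations of the `graphVec` of the coordinate vectors, so the `D v`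
-- span all derivations.
theorem mem_range_algebraMap {r : K} (hr : ∀ v, D v r = 0) : r ∈ Set.range (algebraMap k K) := by
  classical
  have := hD.isGenericZero.essFiniteType
  refine mem_range_algebraMap_of_forall_derivation_eq_zero fun E => ?_
  have hE : grad F x (E ∘ x) = 0 := by
    rw [← derivation_aeval, (hD.isGenericZero.aeval_eq_zero_iff F).2 dvd_rfl, map_zero]
  have hsum (s : K) :
      (∑ i, E (x i) • D (Pi.single i 1)) s = ∑ i, E (x i) * D (Pi.single i 1) s := by
    rw [← Derivation.coeFnAddMonoidHom_apply, map_sum, Finset.sum_apply]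
    rfl
  have hspan : E = ∑ i, E (x i) • D (Pi.single i 1) := by
    refine hD.isGenericZero.derivation_ext ?_
    calc E ∘ x = graphVec F x (constVec K ε) (E ∘ x) := (graphVec_of_grad_eq_zero _ hE).symm
      _ = ∑ i, E (x i) • (D (Pi.single i 1) ∘ x) := by
        simp only [hD.comp_eq, ← map_smul, ← map_sum]
        exact congr_arg _ (sum_smul_constVec_single k (E ∘ x)).symm
      _ = _ := by ext j; simp [hsum]
  rw [hspan, hsum]
  exact Finset.sum_eq_zero fun i _ => by rw [hr, mul_zero]

theorem sum_mul_aeval_eq_zero {ι : Type*} [Fintype ι] {d m : ℕ} (hF : F.IsHomogeneous d)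
    (hmd : m < d) {c : ι → K} {φ : (σ → k) → K} (hc : ∀ v i, D v (c i) = φ v * c i)
    {g : ι → MvPolynomial σ k} (hg : ∀ i, (g i).IsHomogeneous m)
    (hx : ∑ i, c i * aeval x (g i) = 0) (y : σ → K) : ∑ i, c i * aeval y (g i) = 0 := by
  by_cases hc0 : ∀ i, c i = 0
  · simp [hc0]
  obtain ⟨j, hj⟩ := not_forall.1 hc0
  have hconst (i) : ∃ b : k, c i = algebraMap k K b * c j := by
    obtain ⟨b, hb⟩ := hD.mem_range_algebraMap (r := c i / c j) fun v => by
      rw [Derivation.leibniz_div, hc, hc]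
      simp only [smul_eq_mul]
      ring
    exact ⟨b, by rw [hb, div_mul_cancel₀ _ hj]⟩
  choose b hb using hconst
  have hcomb (y : σ → K) : ∑ i, c i * aeval y (g i) = c j * aeval y (∑ i, C (b i) * g i) := by
    rw [map_sum, Finset.mul_sum]
    refine Finset.sum_congr rfl fun i _ => ?_
    rw [hb i, map_mul, aeval_C]
    ring
  have hF0 : F ≠ 0 := by
    rintro rfl
    exact hD.grad_ne_zero (by simp [grad_apply])
  have hzero : ∑ i, C (b i) * g i = 0 := by
    by_contra hne
    refine not_dvd_of_isHomogeneous_of_lt hF hF0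
      (IsHomogeneous.sum _ _ m fun i _ => (hg i).C_mul (b i)) hne hmd ?_
    exact (hD.isGenericZero.aeval_eq_zero_iff _).1
      ((mul_eq_zero.1 ((hcomb x).symm.trans hx)).resolve_left hj)
  rw [hcomb, hzero, map_zero, mul_zero]

theorem apply_self_eq_zero_of_derivation_eq_mul {d : ℕ} (hF : F.IsHomogeneous d) (hd : 3 ≤ d)
    {Q : LinearMap.BilinForm K (σ → K)} {φ : (σ → k) → K}
    (hQ : ∀ l v w : σ → k,
      D l (Q (constVec K v) (constVec K w)) = φ l * Q (constVec K v) (constVec K w))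
    (hx : Q x x = 0) (y : σ → K) : Q y y = 0 := by
  classical
  let c (p : σ × σ) : K :=
    Q (constVec K (Pi.single p.1 (1 : k))) (constVec K (Pi.single p.2 (1 : k)))
  have hexpand (y : σ → K) : Q y y = ∑ p, c p * aeval y (X p.1 * X p.2 : MvPolynomial σ k) := by
    refine (apply_eq_sum_constVec_single k (LinearMap.flip Q y) y).trans ?_
    rw [Fintype.sum_prod_type]
    refine Finset.sum_congr rfl fun i _ => ?_
    rw [LinearMap.flip_apply, apply_eq_sum_constVec_single k (Q _) y, Finset.sum_mul]
    refine Finset.sum_congr rfl fun j _ => ?_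
    rw [map_mul, aeval_X, aeval_X]
    ring
  have hc (l p) : D l (c p) = φ l * c p := hQ l _ _
  have hX (p : σ × σ) : (X p.1 * X p.2 : MvPolynomial σ k).IsHomogeneous 2 :=
    (isHomogeneous_X k p.1).mul (isHomogeneous_X k p.2)
  rw [hexpand] at hx ⊢
  exact hD.sum_mul_aeval_eq_zero hF hd hc hX hx y

theorem exists_graphHess_ne_zero {d : ℕ} (hF : F.IsHomogeneous d) (hd : 2 ≤ d) :
    ∃ v w : σ → k, graphHess F x (constVec K ε) (constVec K v) (constVec K w) ≠ 0 := by
  classical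
  by_contra! h
  let c (i : σ) : K := graphSlope F x (constVec K ε) (constVec K (Pi.single i (1 : k)))
  have hslope (y : σ → K) : graphSlope F x (constVec K ε) y =
      ∑ i, c i * aeval y (X i : MvPolynomial σ k) := by
    simp only [aeval_X, c]
    exact apply_eq_sum_constVec_single k _ y
  have hc (v i) : D v (c i) = (0 : (σ → k) → K) v * c i := by
    rw [Pi.zero_apply, zero_mul]
    exact (hD.derivation_graphSlope ..).trans (h ..)
  have hself := hD.sum_mul_aeval_eq_zero hF hd hc (isHomogeneous_X k)
    ((hslope x).symm.trans (graphSlope_of_grad_eq_zero x (hD.grad_self_eq_zero hF))) (constVec K ε)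
  rw [← hslope, graphSlope_self hD.grad_ne_zero] at hself
  exact neg_ne_zero.2 one_ne_zero hself

-- The quadric osculating to second order, in graph form: the derivations scale it, and it vanishes
-- at `x`, so it vanishes identically because no quadric contains `{F = 0}`.
theorem exists_graphHess_eq {d : ℕ} (hF : F.IsHomogeneous d) (hd : 3 ≤ d)
    {θ : (σ → K) →ₗ[K] K} (hθ : ∀ v w y : σ → k,
      tangentThird F x (constVec K ε) (constVec K v) (constVec K w) (constVec K y) =
        symmProd θ (tangentHess F x (constVec K ε)) (constVec K v) (constVec K w) (constVec K y))
    {u v : σ → k} :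
    letI H := graphHess F x (constVec K ε)
    letI π := graphSlope F x (constVec K ε)
    H (constVec K u) (constVec K u) ≠ 0 →
      H (constVec K u) (constVec K u) * H (constVec K v) (constVec K v) ≠
        H (constVec K u) (constVec K v) ^ 2 →
      ∃ (φ : (σ → K) →ₗ[K] K) (c : K), ∀ y z,
        H y z = φ y * π z + φ z * π y - c * (π y * π z) := by
  set H := graphHess F x (constVec K ε)
  set π := graphSlope F x (constVec K ε)
  intro hu huv
  have : CharZero K := charZero_of_injective_algebraMap (algebraMap k K).injective
  have hDπ (i j : σ → k) : D i (π (constVec K j)) = H (constVec K i) (constVec K j) :=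
    hD.derivation_graphSlope i j
  obtain ⟨φ, hφ⟩ := hD.exists_derivation_graphHess_eq hθ
  obtain ⟨c, hQ⟩ := exists_derivation_quadric_eq_mul (D := D) (π := fun v => π (constVec K v))
    (φ := fun v => φ (constVec K v)) (u := u) (v := v) hD.derivation_comm
    (by simpa only [hDπ] using fun i j => graphHess_comm _ _) (by rwa [hDπ])
    (by simpa only [hDπ] using sub_ne_zero.2 huv) (by simpa only [hDπ] using hφ)
  let Q : LinearMap.BilinForm K (σ → K) := H - φ.smulRight π - π.smulRight φ + c • π.smulRight π
  have hQ_apply (y z) : Q y z = H y z - φ y * π z - φ z * π y + c * (π y * π z) := by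
    simp [Q, mul_comm (π y) (φ z)]
  simp only [hDπ, ← hQ_apply] at hQ
  have hQ_symm : Q.IsSymm := ⟨fun y z => by
    rw [hQ_apply, hQ_apply, graphHess_comm y z]; ring⟩
  have hQx : Q x x = 0 := by
    have hx := hD.grad_self_eq_zero hF
    simp [hQ_apply, H, π, graphHess_self_of_isHomogeneous hF hx, graphSlope_of_grad_eq_zero x hx]
  refine ⟨φ, c, fun y z => ?_⟩
  have hQyz : Q y z = 0 := apply_eq_zero_of_forall_apply_self_eq_zero hQ_symm (W := ⊤)
    (fun y _ => hD.apply_self_eq_zero_of_derivation_eq_mul hF hd hQ hQx y) trivial trivial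
  rw [hQ_apply] at hQyz
  linear_combination hQyz

theorem graphHess_mul_self_eq_sq {d : ℕ} (hF : F.IsHomogeneous d) (hd : 3 ≤ d)
    {θ : (σ → K) →ₗ[K] K} (hθ : ∀ v w y : σ → k,
      tangentThird F x (constVec K ε) (constVec K v) (constVec K w) (constVec K y) =
        symmProd θ (tangentHess F x (constVec K ε)) (constVec K v) (constVec K w) (constVec K y))
    {u : σ → k}
    (hu : graphHess F x (constVec K ε) (constVec K u) (constVec K u) ≠ 0) (v : σ → k) :
    graphHess F x (constVec K ε) (constVec K u) (constVec K u) *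
      graphHess F x (constVec K ε) (constVec K v) (constVec K v) =
        graphHess F x (constVec K ε) (constVec K u) (constVec K v) ^ 2 := by
  by_contra huv
  obtain ⟨φ, c, hH⟩ := hD.exists_graphHess_eq hF hd hθ hu huv
  have hε (y) := (hH (constVec K ε) y).symm.trans (graphHess_self_left y hD.grad_ne_zero)
  rw [graphSlope_self hD.grad_ne_zero] at hε
  set s := graphSlope F x (constVec K ε) (constVec K u)
  refine hu ((hH _ _).trans ?_)
  have hεε := hε (constVec K ε)
  rw [graphSlope_self hD.grad_ne_zero] at hεε
  linear_combination -2 * s * hε (constVec K u) - s ^ 2 * hεε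

end IsTangentFrame

end TangentFrame

section GenericPoint

variable {σ k : Type*} [Fintype σ] [Field k] {F : MvPolynomial σ k} {d : ℕ}

theorem ne_zero_of_grad_ne_zero [CharZero k] (hF : F.IsHomogeneous d) (hd : 2 ≤ d) {a : σ → k}
    (ha : grad F a ≠ 0) : a ≠ 0 := by
  rintro rfl
  refine ha (LinearMap.ext fun ε => ?_)
  have hEuler := hess_self_of_isHomogeneous (0 : σ → k) ε hF
  have hd1 : ((d - 1 : ℕ) : k) ≠ 0 := Nat.cast_ne_zero.2 (by omega)
  simpa [hd1] using hEuler.symm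

namespace IsGenericZero

variable {K : Type*} [Field K] [Algebra k K] {x : σ → K} (hx : IsGenericZero F x) {a : σ → k}
  (ha : eval a F = 0)
include hx ha

theorem grad_ne_zero {ε : σ → k} (hε : grad F a ε ≠ 0) : grad F x (constVec K ε) ≠ 0 := by
  rw [← aeval_grad]
  exact hx.aeval_ne_zero ha (by rwa [aeval_grad])

theorem tangentHess_minor_ne_zero {ε u v : σ → k}
    (huv : tangentHess F a ε u u * tangentHess F a ε v v - tangentHess F a ε u v ^ 2 ≠ 0) :
    letI B := tangentHess F x (constVec K ε)
    B (constVec K u) (constVec K u) * B (constVec K v) (constVec K v) -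
      B (constVec K u) (constVec K v) ^ 2 ≠ 0 := by
  let c := constVec (σ := σ) (k := k) (MvPolynomial σ k)
  let B := tangentHess F X (c ε)
  have := hx.aeval_ne_zero ha (p := B (c u) (c u) * B (c v) (c v) - B (c u) (c v) ^ 2)
    (by simpa only [B, c, aeval_tangentHess, map_mul, map_pow, map_sub, constVec_self] using huv)
  simpa only [B, c, aeval_tangentHess, map_mul, map_pow, map_sub] using this

theorem tangentHess_ne_zero {ε v w : σ → k} (hvw : tangentHess F a ε v w ≠ 0) :
    tangentHess F x (constVec K ε) (constVec K v) (constVec K w) ≠ 0 := by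
  rw [← aeval_tangentHess]
  exact hx.aeval_ne_zero ha (by rwa [aeval_tangentHess])

end IsGenericZero

variable [CharZero k] (hF : F.IsHomogeneous d) (hirr : Irreducible F)
  (hsec : ∀ a, a ≠ 0 → eval a F = 0 → HasSectionDivisorsThrough F a)
include hF hsec

theorem det_gramMatrix_tangentHess_eq_zero_of_six_le (hd : 2 ≤ d) (hσ : 6 ≤ Fintype.card σ)
    {a ε : σ → k} (ha : eval a F = 0) (hε : grad F a ε ≠ 0) (w : Fin 3 → σ → k) :
    (gramMatrix (tangentHess F a ε) w).det = 0 := by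
  have hgrad : grad F a ≠ 0 := fun h => hε (by simp [h])
  exact det_gramMatrix_hess_eq_zero_of_six_le hgrad
    (hsec a (ne_zero_of_grad_ne_zero hF hd hgrad) ha) hσ
    (w := fun i => tangentProj F a ε (w i)) fun i => grad_tangentProj F a ε (w i)

variable [IsAlgClosed k]
include hirr

theorem IsGenericZero.exists_mul_tangentThird_eq_symmProd {K : Type*} [Field K] [Algebra k K]
    {x : σ → K} (hx : IsGenericZero F x) (hd : 2 ≤ d) (hσ : Fintype.card σ = 5) {a ε u v : σ → k}
    {w : Fin 3 → σ → k} (ha : eval a F = 0) (hε : grad F a ε ≠ 0)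
    (hw : (gramMatrix (tangentHess F a ε) w).det ≠ 0) (hu : tangentHess F a ε u u ≠ 0)
    (huv : tangentHess F a ε u u * tangentHess F a ε v v - tangentHess F a ε u v ^ 2 ≠ 0) :
    letI c := constVec K
    letI B := tangentHess F x (c ε)
    ∃ θ : (σ → K) →ₗ[K] K, ∀ y₁ y₂ y₃ : σ → k,
      3 * B (c u) (c u) ^ 2 * tangentThird F x (c ε) (c y₁) (c y₂) (c y₃) =
        symmProd θ B (c y₁) (c y₂) (c y₃) := by
  let c := constVec (σ := σ) (k := k) (MvPolynomial σ k)
  let B := tangentHess F X (c ε)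
  let T := tangentThird F X (c ε)
  let q := grad F X (c ε) * (gramMatrix B fun i => c (w i)).det * B (c u) (c u) *
    (B (c u) (c u) * B (c v) (c v) - B (c u) (c v) ^ 2)
  have hq (b) : eval b q = grad F b ε * (gramMatrix (tangentHess F b ε) w).det *
      tangentHess F b ε u u *
      (tangentHess F b ε u u * tangentHess F b ε v v - tangentHess F b ε u v ^ 2) := by
    simp only [← aeval_eq_eval, q, B, c, map_mul, map_sub, map_pow, aeval_grad, aeval_tangentHess,
      aeval_det_gramMatrix_tangentHess, constVec_self]
  have hq_dvd : ¬ F ∣ q := not_dvd_of_eval_ne_zero ha <| by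
    rw [hq]
    exact mul_ne_zero (mul_ne_zero (mul_ne_zero hε hw) hu) huv
  have hdvd (y₁ y₂ y₃) : F ∣ 3 * B (c u) (c u) ^ 2 * T (c y₁) (c y₂) (c y₃) -
      symmProd ((3 * B (c u) (c u)) • T (c u) (c u) - (2 * T (c u) (c u) (c u)) • B (c u)) B
        (c y₁) (c y₂) (c y₃) := dvd_of_forall_eval_eq_zero hirr hq_dvd fun b hFb hqb => by
    simp only [hq, mul_ne_zero_iff] at hqb
    obtain ⟨⟨⟨hεb, hwb⟩, hub⟩, huvb⟩ := hqb
    have hb : b ≠ 0 := ne_zero_of_grad_ne_zero hF hd fun h => hεb (by simp [h])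
    have hT := smul_tangentThird_eq_symmProd hF hσ (hsec b hb hFb) hεb hwb hub huvb
    simpa [← aeval_eq_eval, B, T, c, symmProd_apply, aeval_tangentHess, aeval_tangentThird,
      sub_eq_zero] using congrArg (fun T => T y₁ y₂ y₃) hT
  refine ⟨(3 * tangentHess F x (constVec K ε) (constVec K u) (constVec K u)) •
      tangentThird F x (constVec K ε) (constVec K u) (constVec K u) -
    (2 * tangentThird F x (constVec K ε) (constVec K u) (constVec K u) (constVec K u)) •
      tangentHess F x (constVec K ε) (constVec K u), fun y₁ y₂ y₃ => ?_⟩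
  simpa [B, T, c, symmProd_apply, aeval_tangentHess, aeval_tangentThird, sub_eq_zero] using
    (hx.aeval_eq_zero_iff _).2 (hdvd y₁ y₂ y₃)

theorem det_gramMatrix_tangentHess_eq_zero_of_card_eq_five (hd : 3 ≤ d) (hσ : Fintype.card σ = 5)
    {a ε : σ → k} (ha : eval a F = 0) (hε : grad F a ε ≠ 0) (w : Fin 3 → σ → k) :
    (gramMatrix (tangentHess F a ε) w).det = 0 := by
  by_contra hw
  obtain ⟨u, v, hu, huv⟩ := exists_two_by_two_minor_ne_zero (isSymm_tangentHess F a ε) hw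
  obtain ⟨K, _, _, x, hx⟩ := exists_isGenericZero hirr
  have : CharZero K := charZero_of_injective_algebraMap (algebraMap k K).injective
  obtain ⟨D, hD⟩ := hx.exists_isTangentFrame (hx.grad_ne_zero ha hε)
  obtain ⟨θ, hθ⟩ :=
    hx.exists_mul_tangentThird_eq_symmProd hF hirr hsec (by omega) hσ ha hε hw hu huv
  have hux := hx.tangentHess_ne_zero ha hu
  set r := 3 * tangentHess F x (constVec K ε) (constVec K u) (constVec K u) ^ 2
  have hr : r ≠ 0 := mul_ne_zero three_ne_zero (pow_ne_zero 2 hux)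
  have hθ' (y₁ y₂ y₃ : σ → k) :
      tangentThird F x (constVec K ε) (constVec K y₁) (constVec K y₂) (constVec K y₃) =
        symmProd (r⁻¹ • θ) (tangentHess F x (constVec K ε)) (constVec K y₁) (constVec K y₂)
          (constVec K y₃) := by
    simp only [symmProd_apply, LinearMap.smul_apply, smul_eq_mul, mul_assoc, ← mul_add]
    rw [eq_inv_mul_iff_mul_eq₀ hr, hθ, symmProd_apply, add_assoc]
  have hHess (y z) := tangentHess_eq_mul_graphHess y z hD.grad_ne_zero
  have hsq := hD.graphHess_mul_self_eq_sq hF hd hθ' (right_ne_zero_of_mul (hHess _ _ ▸ hux)) v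
  refine hx.tangentHess_minor_ne_zero ha huv ?_
  simp only [hHess]
  linear_combination grad F x (constVec K ε) ^ 6 * hsq

end GenericPoint

section GenericRank

variable {σ k : Type*} [Fintype σ] [Field k] [CharZero k] [IsAlgClosed k] {F : MvPolynomial σ k}
  {d : ℕ}

theorem exists_generic_tangentHess_ne_zero (hF : F.IsHomogeneous d) (hirr : Irreducible F)
    (hd : 2 ≤ d) : ∃ (p : MvPolynomial σ k) (ε v w : σ → k), ¬ F ∣ p ∧
      ∀ a, eval a p ≠ 0 → grad F a ε ≠ 0 ∧ tangentHess F a ε v w ≠ 0 := by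
  classical
  obtain ⟨K, _, _, x, hx⟩ := exists_isGenericZero hirr
  obtain ⟨ε, hε⟩ : ∃ ε : σ → k, grad F x (constVec K ε) ≠ 0 := by
    by_contra! hgrad
    have hpderiv (i) : pderiv i F = 0 := by
      have hdvd : F ∣ pderiv i F := (hx.aeval_eq_zero_iff _).1 <| by
        simpa [constVec_single, grad_apply, Pi.single_apply] using hgrad (Pi.single i 1)
      by_contra hne
      exact not_dvd_of_isHomogeneous_of_lt hF hirr.ne_zero hF.pderiv hne (by omega) hdvd
    have hEuler := hF.sum_X_mul_pderiv
    simp only [hpderiv, mul_zero, Finset.sum_const_zero] at hEuler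
    exact smul_ne_zero (by omega) hirr.ne_zero hEuler.symm
  obtain ⟨D, hD⟩ := hx.exists_isTangentFrame hε
  obtain ⟨v, w, hvw⟩ := hD.exists_graphHess_ne_zero hF hd
  let c := constVec (σ := σ) (k := k) (MvPolynomial σ k)
  refine ⟨grad F X (c ε) * tangentHess F X (c ε) (c v) (c w), ε, v, w, ?_, fun a ha => ?_⟩
  · rw [← hx.aeval_eq_zero_iff, map_mul, aeval_grad, aeval_tangentHess,
      tangentHess_eq_mul_graphHess _ _ hε]
    simp [hε, hvw]
  · rw [← aeval_eq_eval, map_mul, aeval_grad, aeval_tangentHess] at ha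
    exact mul_ne_zero_iff.1 ha

end GenericRank

/-- Theorem 7.5 of Salberger: let `X = {F = 0} ⊂ P^n` be an integral non-linear
hypersurface over an algebraically closed field of characteristic `0`, of dimension at
least four (`n ≥ 5`), or of dimension three (`n = 4`) and degree at least three.  If
every hyperplane section of `X` is covered by its linear divisors, then `X` is covered
by its linear divisors. -/
theorem stmt_13 (k : Type*) [Field k] [IsAlgClosed k] [CharZero k] (n d : ℕ)
    (hnd : 5 ≤ n ∨ (n = 4 ∧ 3 ≤ d)) (hd : 2 ≤ d)
    (F : MvPolynomial (Fin (n + 1)) k) (hhom : F.IsHomogeneous d) (hirr : Irreducible F)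
    (hcov : ∀ ℓ : (Fin (n + 1) → k) →ₗ[k] k, ℓ ≠ 0 →
      ∀ x : Fin (n + 1) → k, x ≠ 0 → eval x F = 0 → ℓ x = 0 →
      ∃ W : Submodule k (Fin (n + 1) → k), Module.finrank k W = n - 2 ∧ x ∈ W ∧
        ∀ y ∈ W, ℓ y = 0 ∧ eval y F = 0) :
    ∀ x : Fin (n + 1) → k, x ≠ 0 → eval x F = 0 →
      ∃ W : Submodule k (Fin (n + 1) → k), Module.finrank k W = n - 1 ∧ x ∈ W ∧
        ∀ y ∈ W, eval y F = 0 := by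
  have hsec (a : Fin (n + 1) → k) (ha : a ≠ 0) (hFa : eval a F = 0) :
      HasSectionDivisorsThrough F a := fun ℓ hℓ hℓa => by
    obtain ⟨W, hW, hWF⟩ := hcov ℓ hℓ a ha hFa hℓa
    exact ⟨W, by rw [hW, Fintype.card_fin]; omega, hWF⟩
  have hdet {a ε : Fin (n + 1) → k} (hFa : eval a F = 0) (hε : grad F a ε ≠ 0)
      (w : Fin 3 → Fin (n + 1) → k) :
      (gramMatrix (tangentHess F a ε) w).det = 0 := by
    rcases hnd with hn | ⟨rfl, hd3⟩
    · exact det_gramMatrix_tangentHess_eq_zero_of_six_le hhom hsec hd (by simpa using hn) hFa hε w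
    · exact det_gramMatrix_tangentHess_eq_zero_of_card_eq_five hhom hirr hsec hd3 rfl hFa hε w
  obtain ⟨p, ε, v, w, hp, hgeneric⟩ := exists_generic_tangentHess_ne_zero hhom hirr hd
  intro x _ hx
  obtain ⟨W, hW, hWF⟩ := hasLinearDivisorThrough_of_generic hhom hirr hp (fun a hFa hpa => by
    obtain ⟨hε, hvw⟩ := hgeneric a hpa
    have ha : a ≠ 0 := ne_zero_of_grad_ne_zero hhom hd fun h => hε (by simp [h])
    exact hasLinearDivisorThrough_of_det_tangentHess_eq_zero hhom
      (by rw [Fintype.card_fin]; omega) (hsec a ha hFa) hFa hε hvw (hdet hFa hε)) hx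
  rw [Fintype.card_fin] at hW
  exact ⟨W, by omega, hWF⟩
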